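/- arXiv:1509.09129 — 4 statements merged into one kernel-verified Lean document; each statement's English description precedes it below -/
import Mathlib

section
/- Let α, β ∈ (0,1), M > 0. Let υ_α be the (1−α)-quantile of the chi-squared distribution with d degrees of freedom, X̄ₙ = (1/n)·Σ_{i=1}^n X_i, and Ψ₁ = 1{‖√n·X̄ₙ‖² > υ_α}. Then Ψ₁ is a test of level α: P₀(Ψ₁ = 1) ≤ α. Moreover, there exists a positive constant C(α,β,M) depending only on α, β, M such that for every ρ ≥ C(α,β,M)·d^{1/4}/√n and every f = f(ε,μ) ∈ F₂[M] with ε‖μ‖ ≥ ρ, one has P_f(Ψ₁ = 0) ≤ β. -/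
open MeasureTheory Real

noncomputable section

/-- Density of the standard Gaussian distribution `N_d(0_d, I_d)` on `ℝ^d`. -/
def gaussDensity (d : ℕ) (x : EuclideanSpace ℝ (Fin d)) : ℝ :=
  (2 * π) ^ (-(d : ℝ) / 2) * Real.exp (-‖x‖ ^ 2 / 2)

/-- The standard Gaussian measure on `ℝ^d`. -/
def gaussMeasure (d : ℕ) : Measure (EuclideanSpace ℝ (Fin d)) :=
  volume.withDensity fun x => ENNReal.ofReal (gaussDensity d x)

/-- The two-component Gaussian mixture measure with parameters `(ε, μ)`. -/
def mixMeasure (d : ℕ) (ε : ℝ) (μ : EuclideanSpace ℝ (Fin d)) :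
    Measure (EuclideanSpace ℝ (Fin d)) :=
  volume.withDensity fun x =>
    ENNReal.ofReal ((1 - ε) * gaussDensity d x + ε * gaussDensity d (x - μ))

/-- The law of the i.i.d. `n`-sample with common density the null `φ_d`. -/
def nullLaw (d n : ℕ) : Measure (Fin n → EuclideanSpace ℝ (Fin d)) :=
  Measure.pi fun _ : Fin n => gaussMeasure d

/-- The law of the i.i.d. `n`-sample with common density `f_{(ε,μ)}`. -/
def mixLaw (d n : ℕ) (ε : ℝ) (μ : EuclideanSpace ℝ (Fin d)) :
    Measure (Fin n → EuclideanSpace ℝ (Fin d)) :=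
  Measure.pi fun _ : Fin n => mixMeasure d ε μ

/-- The test statistic `‖√n · X̄ₙ‖²` where `X̄ₙ = (1/n)·Σᵢ Xᵢ`. -/
def chiStat (d n : ℕ) (X : Fin n → EuclideanSpace ℝ (Fin d)) : ℝ :=
  ‖Real.sqrt n • ((n : ℝ)⁻¹ • ∑ i, X i)‖ ^ 2

/-- The `(1-α)`-quantile `υ_α` of the chi-squared distribution with `d` degrees of
freedom, i.e. `inf {t | P(T > t) ≤ α}` for `T = ‖√n·X̄ₙ‖²` which has the chi-squared
distribution with `d` degrees of freedom under the null. -/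
def upsilon (d n : ℕ) (α : ℝ) : ℝ :=
  sInf {t : ℝ | nullLaw d n {X | t < chiStat d n X} ≤ ENNReal.ofReal α}

/-!
Both error bounds rest on Chebyshev's inequality alone. An observation with density `f(ε,μ)` is
distributed as `Z + ξ • μ` with `Z` standard Gaussian and `ξ` an independent Bernoulli variable of
parameter `ε`. Hence `√n · X̄ₙ` is distributed as `Z + S • μ`, where `Z` is again standard Gaussian
and `S`, the normalized sum of the Bernoulli variables, stays within a constant of its mean `√n ε`.
Now `‖Z + S • μ‖² = ‖Z‖² + 2 S ⟪μ, Z⟫ + S² ‖μ‖²`: the first term deviates from `d` by `O(√d)`, and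
`⟪μ, Z⟫ = O(‖μ‖)`, so once `√n ε ‖μ‖` exceeds a large multiple of `d ^ (1 / 4)` the last term
dominates the cross term and the excess `O(√d)` over `d` of both the noise and the quantile `υ_α`.
-/

open ProbabilityTheory
open scoped ENNReal RealInnerProductSpace

section UpperQuantile

variable {Ω : Type*} [MeasurableSpace Ω]

/-- The upper `a`-quantile `inf {t | P(T > t) ≤ a}` of a real random variable `T`, i.e. its
`(1 - a)`-quantile. It is meaningful only if the set is nonempty and bounded below. -/
def upperQuantile (P : Measure Ω) (T : Ω → ℝ) (a : ℝ≥0∞) : ℝ :=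
  sInf {t | P {ω | t < T ω} ≤ a}

lemma upperQuantile_map {Ω' : Type*} [MeasurableSpace Ω'] (P : Measure Ω) {f : Ω → Ω'}
    (hf : Measurable f) {T : Ω' → ℝ} (hT : Measurable T) (a : ℝ≥0∞) :
    upperQuantile (P.map f) T a = upperQuantile P (T ∘ f) a := by
  have htail (t : ℝ) : P.map f {x | t < T x} = P {ω | t < (T ∘ f) ω} :=
    Measure.map_apply hf (measurableSet_lt measurable_const hT)
  simp only [upperQuantile, htail]

lemma upperQuantile_le {P : Measure Ω} {T : Ω → ℝ} {a : ℝ≥0∞} {c t : ℝ} (hc : ∀ ω, c ≤ T ω)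
    (ha : a < P Set.univ) (ht : P {ω | t < T ω} ≤ a) : upperQuantile P T a ≤ t := by
  refine csInf_le ⟨c, fun s hs => ?_⟩ ht
  by_contra! hsc
  have huniv : {ω | s < T ω} = Set.univ := Set.eq_univ_of_forall fun ω => hsc.trans_le (hc ω)
  exact ha.not_ge (huniv ▸ hs)

lemma exists_measure_lt_le (P : Measure Ω) [IsFiniteMeasure P] {T : Ω → ℝ} (hT : Measurable T)
    {a : ℝ≥0∞} (ha : a ≠ 0) : ∃ t : ℝ, P {ω | t < T ω} ≤ a := by
  have hempty : ⋂ t : ℝ, {ω | t < T ω} = ∅ := by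
    ext ω
    simpa using ⟨T ω, le_rfl⟩
  have hlim := tendsto_measure_iInter_atTop (μ := P) (s := fun t : ℝ => {ω | t < T ω})
    (fun t => (measurableSet_lt measurable_const hT).nullMeasurableSet)
    (fun _ _ hst _ hω => hst.trans_lt hω) ⟨0, measure_ne_top _ _⟩
  rw [hempty, measure_empty] at hlim
  exact (hlim.eventually_le_const ha.bot_lt).exists

lemma measure_upperQuantile_lt_le (P : Measure Ω) [IsFiniteMeasure P] {T : Ω → ℝ}
    (hT : Measurable T) {a : ℝ≥0∞} (ha : a ≠ 0) : P {ω | upperQuantile P T a < T ω} ≤ a := by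
  obtain ⟨u, hu_anti, hu_gt, hu_lim⟩ := exists_seq_strictAnti_tendsto (upperQuantile P T a)
  have hunion : {ω | upperQuantile P T a < T ω} = ⋃ k, {ω | u k < T ω} := by
    ext ω
    simp only [Set.mem_ofPred_eq, Set.mem_iUnion]
    exact ⟨fun h => (hu_lim.eventually_lt_const h).exists, fun ⟨k, hk⟩ => (hu_gt k).trans hk⟩
  have hmono : Monotone fun k => {ω | u k < T ω} :=
    fun _ _ hij _ hω => (hu_anti.antitone hij).trans_lt hω
  rw [hunion, hmono.measure_iUnion]
  refine iSup_le fun k => ?_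
  obtain ⟨t, ht, htk⟩ := exists_lt_of_csInf_lt (exists_measure_lt_le P hT ha) (hu_gt k)
  exact (measure_mono fun _ hω => htk.trans hω).trans ht

end UpperQuantile

lemma measure_pi_le_abs_sum_sub_le {ι Ω : Type*} [Fintype ι] [MeasurableSpace Ω] {P : Measure Ω}
    [IsProbabilityMeasure P] {f : Ω → ℝ} (hf : MemLp f 2 P) {c : ℝ} (hc : 0 < c) :
    Measure.pi (fun _ : ι => P) {x | c ≤ |∑ i, f (x i) - Fintype.card ι * ∫ ω, f ω ∂P|} ≤
      ENNReal.ofReal (Fintype.card ι * Var[f; P] / c ^ 2) := by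
  have hcoord (i : ι) : MemLp (fun x : ι → Ω => f (x i)) 2 (Measure.pi fun _ => P) :=
    hf.comp_measurePreserving (measurePreserving_eval (fun _ : ι => P) i)
  have hmean : ∫ x, (∑ i, fun x : ι → Ω => f (x i)) x ∂(Measure.pi fun _ : ι => P) =
      Fintype.card ι * ∫ ω, f ω ∂P := by
    simp_rw [Finset.sum_apply]
    rw [integral_finsetSum _ fun i _ => (hcoord i).integrable one_le_two]
    simp [integral_comp_eval (μ := fun _ : ι => P) hf.1]
  have hvar : Var[∑ i, fun x : ι → Ω => f (x i); Measure.pi fun _ : ι => P] =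
      Fintype.card ι * Var[f; P] := by
    simp [variance_sum_pi (X := fun _ : ι => f) fun _ => hf]
  have h := meas_ge_le_variance_div_sq (memLp_finsetSum' Finset.univ fun i _ => hcoord i) hc
  rw [hmean, hvar] at h
  simpa only [Finset.sum_apply] using h

lemma measure_prod_le_add {α β : Type*} [MeasurableSpace α] [MeasurableSpace β] (P : Measure α)
    (Q : Measure β) [IsProbabilityMeasure P] [IsProbabilityMeasure Q] {s : Set (α × β)}
    {A : Set α} {B : Set β} (hs : ∀ p ∈ s, p.1 ∈ A ∨ p.2 ∈ B) : P.prod Q s ≤ P A + Q B := by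
  have hcover : s ⊆ A ×ˢ Set.univ ∪ Set.univ ×ˢ B := fun p hp => by simpa using hs p hp
  refine (measure_mono hcover).trans ((measure_union_le _ _).trans_eq ?_)
  rw [Measure.prod_prod, Measure.prod_prod, measure_univ, measure_univ, mul_one, one_mul]

lemma map_pi_map_prod {ι α β γ : Type*} [Fintype ι] [MeasurableSpace α] [MeasurableSpace β]
    [MeasurableSpace γ] (P : Measure α) (Q : Measure β) [IsProbabilityMeasure P]
    [IsProbabilityMeasure Q] {f : α × β → γ} (hf : Measurable f) :
    Measure.pi (fun _ : ι => (P.prod Q).map f) =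
      ((Measure.pi fun _ : ι => P).prod (Measure.pi fun _ : ι => Q)).map
        fun p i => f (p.1 i, p.2 i) := by
  have := Measure.isProbabilityMeasure_map (μ := P.prod Q) hf.aemeasurable
  rw [← Measure.pi_map_pi fun _ => hf.aemeasurable,
    ← (measurePreserving_arrowProdEquivProdArrow α β ι (fun _ => P) fun _ => Q).map_eq,
    Measure.map_map (by fun_prop) (MeasurableEquiv.measurable _)]
  rfl

section NormalizedSum

variable {ι E : Type*} [Fintype ι] [NormedAddCommGroup E] [NormedSpace ℝ E]

/-- The sum of a finite family of vectors divided by the square root of their number, i.e. the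
rescaled empirical mean `√n · X̄ₙ` of a sample of size `n`. -/
def normalizedSum (X : ι → E) : E :=
  (√(Fintype.card ι))⁻¹ • ∑ i, X i

lemma normalizedSum_add_smul (X : ι → E) (s : ι → ℝ) (μ : E) :
    normalizedSum (fun i => X i + s i • μ) = normalizedSum X + normalizedSum s • μ := by
  simp only [normalizedSum, Finset.sum_add_distrib, ← Finset.sum_smul, smul_add, smul_assoc]

variable [MeasurableSpace E] [BorelSpace E] [SecondCountableTopology E]

lemma measurable_normalizedSum : Measurable (normalizedSum : (ι → E) → E) := by
  unfold normalizedSum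
  fun_prop

lemma map_normalizedSum_pi_map_add_smul (P : Measure E) (Q : Measure ℝ) [IsProbabilityMeasure P]
    [IsProbabilityMeasure Q] (μ : E) :
    (Measure.pi fun _ : ι => (P.prod Q).map fun p => p.1 + p.2 • μ).map normalizedSum =
      (((Measure.pi fun _ : ι => P).map normalizedSum).prod
        ((Measure.pi fun _ : ι => Q).map normalizedSum)).map fun p => p.1 + p.2 • μ := by
  rw [map_pi_map_prod P Q (by fun_prop),
    Measure.map_prod_map _ _ measurable_normalizedSum measurable_normalizedSum,
    Measure.map_map measurable_normalizedSum (by fun_prop), Measure.map_map (by fun_prop)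
      (measurable_normalizedSum.prodMap measurable_normalizedSum)]
  congr with p
  exact normalizedSum_add_smul p.1 p.2 μ

lemma map_normalizedSum_pi_le_abs_sub_le [Nonempty ι] {Q : Measure ℝ} [IsProbabilityMeasure Q]
    (hQ : MemLp (fun x => x) 2 Q) {c : ℝ} (hc : 0 < c) :
    (Measure.pi fun _ : ι => Q).map normalizedSum {s | c ≤ |s - √(Fintype.card ι) * ∫ x, x ∂Q|} ≤
      ENNReal.ofReal (Var[fun x => x; Q] / c ^ 2) := by
  have hcard : (0 : ℝ) < Fintype.card ι := by exact_mod_cast Fintype.card_pos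
  have hrescale (X : ι → ℝ) : ∑ i, X i - Fintype.card ι * ∫ x, x ∂Q =
      √(Fintype.card ι) * (normalizedSum X - √(Fintype.card ι) * ∫ x, x ∂Q) := by
    rw [mul_sub, ← mul_assoc, mul_self_sqrt hcard.le, normalizedSum, smul_eq_mul,
      mul_inv_cancel_left₀ (sqrt_pos.2 hcard).ne']
  have h := measure_pi_le_abs_sum_sub_le (ι := ι) hQ (mul_pos (sqrt_pos.2 hcard) hc)
  simp only [hrescale, abs_mul, abs_of_pos (sqrt_pos.2 hcard),
    mul_le_mul_iff_right₀ (sqrt_pos.2 hcard), mul_pow, sq_sqrt hcard.le,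
    mul_div_mul_left _ _ hcard.ne'] at h
  rwa [Measure.map_apply measurable_normalizedSum (measurableSet_le (by fun_prop) (by fun_prop))]

end NormalizedSum

section Gaussian

open Module Polynomial

lemma deriv_eval_mul_exp_sq (v : ℝ) (p : ℝ[X]) :
    (deriv fun t => p.eval t * exp (v * t ^ 2 / 2)) =
      fun t => (derivative p + C v * X * p).eval t * exp (v * t ^ 2 / 2) := by
  ext t
  have hexp : HasDerivAt (fun t => exp (v * t ^ 2 / 2)) (exp (v * t ^ 2 / 2) * (v * t)) t := by
    convert! (((hasDerivAt_pow 2 t).const_mul v).div_const 2).exp using 1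
    rw [Nat.cast_ofNat, pow_one]
    ring
  refine ((p.hasDerivAt t).mul hexp).deriv.trans ?_
  simp only [eval_add, eval_mul, eval_C, eval_X]
  ring

lemma integral_pow_four_gaussianReal (v : NNReal) : ∫ x, x ^ 4 ∂gaussianReal 0 v = 3 * v ^ 2 := by
  have hmgf : mgf (fun x => x) (gaussianReal 0 v) =
      fun t => (1 : ℝ[X]).eval t * exp (v * t ^ 2 / 2) := by
    simp [mgf_fun_id_gaussianReal]
  have hmoment : iteratedDeriv 4 (mgf (fun x => x) (gaussianReal 0 v)) 0 =
      ∫ x, x ^ 4 ∂gaussianReal 0 v := by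
    rw [iteratedDeriv_mgf_zero] <;> simp
  rw [← hmoment, hmgf]
  simp only [iteratedDeriv_succ, iteratedDeriv_zero, deriv_eval_mul_exp_sq]
  simp only [derivative_zero, derivative_one, derivative_add, derivative_mul, derivative_C,
    derivative_X, eval_add, eval_mul, eval_C, eval_X, eval_one, eval_zero, zero_pow two_ne_zero,
    mul_zero, zero_div, exp_zero]
  ring

lemma integral_sq_gaussianReal (v : NNReal) : ∫ x, x ^ 2 ∂gaussianReal 0 v = v := by
  have h := variance_fun_id_gaussianReal (μ := 0) (v := v)
  rw [variance_eq_integral (by fun_prop)] at h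
  simpa using h

lemma memLp_sq_gaussianReal (v : NNReal) : MemLp (fun x : ℝ => x ^ 2) 2 (gaussianReal 0 v) := by
  rw [memLp_two_iff_integrable_sq (by fun_prop)]
  refine ((memLp_id_gaussianReal (μ := 0) (v := v) 4).integrable_norm_pow (p := 4)
    (by norm_num)).congr (ae_of_all _ fun x => ?_)
  simp only [id, norm_eq_abs, ← pow_mul]
  exact Even.pow_abs (by decide) x

lemma variance_sq_gaussianReal (v : NNReal) :
    Var[fun x => x ^ 2; gaussianReal 0 v] = 2 * v ^ 2 := by
  rw [variance_eq_sub (memLp_sq_gaussianReal v)]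
  simp only [Pi.pow_apply, ← pow_mul, Nat.reduceMul, integral_pow_four_gaussianReal,
    integral_sq_gaussianReal]
  ring

variable {E : Type*} [NormedAddCommGroup E] [InnerProductSpace ℝ E] [FiniteDimensional ℝ E]
  [MeasurableSpace E] [BorelSpace E]

lemma stdGaussian_le_abs_norm_sq_sub_finrank_le {c : ℝ} (hc : 0 < c) :
    stdGaussian E {x | c ≤ |‖x‖ ^ 2 - finrank ℝ E|} ≤
      ENNReal.ofReal (finrank ℝ E * 2 / c ^ 2) := by
  have hnorm (x : Fin (finrank ℝ E) → ℝ) :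
      ‖∑ i, x i • stdOrthonormalBasis ℝ E i‖ ^ 2 = ∑ i, x i ^ 2 := by
    simp [← (stdOrthonormalBasis ℝ E).sum_sq_inner_right,
      (stdOrthonormalBasis ℝ E).orthonormal.inner_right_fintype]
  rw [stdGaussian, Measure.map_apply (by fun_prop) (measurableSet_le (by fun_prop) (by fun_prop))]
  simpa [hnorm, integral_sq_gaussianReal, variance_sq_gaussianReal] using
    measure_pi_le_abs_sum_sub_le (ι := Fin (finrank ℝ E)) (memLp_sq_gaussianReal 1) hc

lemma stdGaussian_sqrt_mul_sqrt_le_abs_norm_sq_sub_finrank_le [Nontrivial E] {δ : ℝ} (hδ : 0 < δ) :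
    stdGaussian E {x | √(2 / δ) * √(finrank ℝ E) ≤ |‖x‖ ^ 2 - finrank ℝ E|} ≤
      ENNReal.ofReal δ := by
  have hpos : (0 : ℝ) < finrank ℝ E := by exact_mod_cast finrank_pos
  convert stdGaussian_le_abs_norm_sq_sub_finrank_le (E := E) (c := √(2 / δ) * √(finrank ℝ E))
    (by positivity) using 2
  rw [mul_pow, sq_sqrt (by positivity), sq_sqrt hpos.le]
  field_simp

lemma upperQuantile_norm_sq_stdGaussian_le [Nontrivial E] {α : ℝ} (hα : α ∈ Set.Ioo (0 : ℝ) 1) :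
    upperQuantile (stdGaussian E) (fun x => ‖x‖ ^ 2) (ENNReal.ofReal α) ≤
      finrank ℝ E + √(2 / α) * √(finrank ℝ E) := by
  refine upperQuantile_le (c := 0) (fun x => by positivity) (by simpa using hα.2) ?_
  refine (measure_mono fun x hx => ?_).trans
    (stdGaussian_sqrt_mul_sqrt_le_abs_norm_sq_sub_finrank_le hα.1)
  exact (le_sub_iff_add_le'.2 (Set.mem_ofPred_eq ▸ hx).le).trans (le_abs_self _)

lemma stdGaussian_le_abs_inner_le (μ : E) {c : ℝ} (hc : 0 < c) :
    stdGaussian E {x | c ≤ |⟪μ, x⟫|} ≤ ENNReal.ofReal (‖μ‖ ^ 2 / c ^ 2) := by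
  have h := meas_ge_le_variance_div_sq
    (IsGaussian.memLp_dual (stdGaussian E) (innerSL ℝ μ) 2 (by simp)) hc
  rw [variance_dual_stdGaussian, integral_strongDual_stdGaussian] at h
  simpa using h

lemma stdGaussian_sqrt_mul_norm_le_abs_inner_le {μ : E} (hμ : μ ≠ 0) {δ : ℝ} (hδ : 0 < δ) :
    stdGaussian E {x | √(1 / δ) * ‖μ‖ ≤ |⟪μ, x⟫|} ≤ ENNReal.ofReal δ := by
  have := norm_ne_zero_iff.2 hμ
  convert stdGaussian_le_abs_inner_le μ (c := √(1 / δ) * ‖μ‖) (by positivity) using 2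
  rw [mul_pow, sq_sqrt (by positivity)]
  field_simp

lemma map_normalizedSum_pi_stdGaussian {ι : Type*} [Fintype ι] [Nonempty ι] :
    (Measure.pi fun _ : ι => stdGaussian E).map normalizedSum = stdGaussian E := by
  have := Measure.isProbabilityMeasure_map (μ := Measure.pi fun _ : ι => stdGaussian E)
    measurable_normalizedSum.aemeasurable
  refine Measure.ext_of_charFun (funext fun t => ?_)
  unfold normalizedSum
  rw [charFun_map_smul_comp (by fun_prop), charFun_map_sum_pi_eq_prod, Finset.prod_const,
    Pi.pow_apply, charFun_stdGaussian, charFun_stdGaussian, ← Complex.exp_nat_mul,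
    Finset.card_univ, norm_smul, norm_inv, norm_of_nonneg (sqrt_nonneg _)]
  have hexponent : (Fintype.card ι : ℝ) * (-((√(Fintype.card ι))⁻¹ * ‖t‖) ^ 2 / 2) =
      -‖t‖ ^ 2 / 2 := by
    rw [mul_pow, inv_pow, sq_sqrt (by positivity)]
    field_simp
  exact congrArg Complex.exp (mod_cast hexponent)

lemma integrable_exp_neg_norm_sq_div_two : Integrable fun x : E => exp (-‖x‖ ^ 2 / 2) := by
  have h := GaussianFourier.integrable_cexp_neg_mul_sq_norm_add (V := E) (b := 1 / 2)
    (by norm_num) 0 0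
  refine h.norm.congr (ae_of_all _ fun x => ?_)
  have hexponent : -(1 / 2) * (‖x‖ : ℂ) ^ 2 + 0 * (⟪0, x⟫ : ℝ) = (-‖x‖ ^ 2 / 2 : ℝ) := by
    push_cast
    ring
  simp only [hexponent, ← Complex.ofReal_exp, Complex.norm_real, norm_of_nonneg (exp_nonneg _)]

lemma integral_exp_neg_norm_sq_div_two_mul_cexp_inner (t : E) :
    ∫ x : E, exp (-‖x‖ ^ 2 / 2) * Complex.exp (⟪x, t⟫ * Complex.I) =
      ((2 * π) ^ (finrank ℝ E / 2 : ℝ) : ℝ) * Complex.exp (-‖t‖ ^ 2 / 2) := by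
  have hintegrand (x : E) : exp (-‖x‖ ^ 2 / 2) * Complex.exp (⟪x, t⟫ * Complex.I) =
      Complex.exp (-(1 / 2) * ‖x‖ ^ 2 + Complex.I * ⟪t, x⟫) := by
    rw [Complex.ofReal_exp, ← Complex.exp_add, real_inner_comm]
    congr 1
    push_cast
    ring
  simp_rw [hintegrand]
  rw [GaussianFourier.integral_cexp_neg_mul_sq_norm_add (by norm_num), Complex.I_sq,
    Complex.ofReal_cpow (by positivity)]
  congr 2
  · push_cast
    ring
  · push_cast
    ring
  · ring

variable (E) in
lemma stdGaussian_eq_withDensity :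
    stdGaussian E = volume.withDensity fun x =>
      ENNReal.ofReal ((2 * π) ^ (-(finrank ℝ E : ℝ) / 2) * exp (-‖x‖ ^ 2 / 2)) := by
  have := isFiniteMeasure_withDensity_ofReal
    ((integrable_exp_neg_norm_sq_div_two (E := E)).const_mul ((2 * π) ^ (-(finrank ℝ E : ℝ) / 2))).2
  refine Measure.ext_of_charFun (funext fun t => ?_)
  have hdensity (x : E) :
      (ENNReal.ofReal ((2 * π) ^ (-(finrank ℝ E : ℝ) / 2) * exp (-‖x‖ ^ 2 / 2))).toReal =
        (2 * π) ^ (-(finrank ℝ E : ℝ) / 2) * exp (-‖x‖ ^ 2 / 2) :=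
    ENNReal.toReal_ofReal (by positivity)
  rw [charFun_stdGaussian, charFun_apply,
    integral_withDensity_eq_integral_toReal_smul (by fun_prop) (ae_of_all _ fun _ => by simp)]
  simp_rw [hdensity, Complex.real_smul, Complex.ofReal_mul, mul_assoc]
  rw [integral_const_mul, integral_exp_neg_norm_sq_div_two_mul_cexp_inner, ← mul_assoc,
    ← Complex.ofReal_mul, ← rpow_add (by positivity), neg_div (2 : ℝ) (finrank ℝ E : ℝ),
    neg_add_cancel, rpow_zero, Complex.ofReal_one, one_mul]

end Gaussian

lemma map_withDensity_comp {α β : Type*} [MeasurableSpace α] [MeasurableSpace β] {μ : Measure α}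
    {ν : Measure β} {g : α → β} (hg : MeasurePreserving g μ ν) {f : β → ℝ≥0∞} (hf : Measurable f) :
    (μ.withDensity (f ∘ g)).map g = ν.withDensity f := by
  ext s hs
  rw [Measure.map_apply hg.measurable hs, withDensity_apply _ (hg.measurable hs),
    withDensity_apply _ hs]
  exact hg.setLIntegral_comp_preimage hs hf

section Bernoulli

open unitInterval

lemma map_prod_bernoulliMeasure {α β γ : Type*} [MeasurableSpace α] [MeasurableSpace β]
    [MeasurableSpace γ] (P : Measure α) [SFinite P] (x y : β) (p : I) {f : α × β → γ}
    (hf : Measurable f) :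
    (P.prod Ber(x, y, p)).map f =
      unitInterval.toNNReal p • P.map (fun a => f (a, x)) +
        unitInterval.toNNReal (σ p) • P.map (fun a => f (a, y)) := by
  rw [bernoulliMeasure_def, Measure.prod_add, Measure.prod_smul_right, Measure.prod_smul_right,
    Measure.prod_dirac, Measure.prod_dirac, Measure.map_add _ _ hf, Measure.map_smul,
    Measure.map_smul, Measure.map_map hf (by fun_prop), Measure.map_map hf (by fun_prop)]
  rfl

lemma memLp_two_bernoulliMeasure (x y : ℝ) (p : I) : MemLp (fun z => z) 2 Ber(x, y, p) :=
  (memLp_two_iff_integrable_sq (by fun_prop)).2 (integrable_bernoulliMeasure x y p _)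

lemma variance_bernoulliMeasure (x y : ℝ) (p : I) :
    Var[fun z => z; Ber(x, y, p)] = p * (1 - p) * (x - y) ^ 2 := by
  rw [variance_eq_sub (memLp_two_bernoulliMeasure x y p)]
  simp only [Pi.pow_apply, integral_bernoulliMeasure, smul_eq_mul]
  ring

lemma map_normalizedSum_pi_bernoulliMeasure_le_abs_sub_le {ι : Type*} [Fintype ι]
    [Nonempty ι] (p : I) {δ : ℝ} (hδ : 0 < δ) :
    (Measure.pi fun _ : ι => Ber((1 : ℝ), 0, p)).map normalizedSum
        {s | √(1 / δ) ≤ |s - √(Fintype.card ι) * p|} ≤ ENNReal.ofReal δ := by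
  have hvar : Var[fun z => z; Ber((1 : ℝ), 0, p)] / √(1 / δ) ^ 2 ≤ δ := by
    rw [variance_bernoulliMeasure, sq_sqrt (by positivity), div_div_eq_mul_div, div_one]
    refine mul_le_of_le_one_left hδ.le ?_
    nlinarith [p.2.1, p.2.2]
  have h := map_normalizedSum_pi_le_abs_sub_le (ι := ι) (memLp_two_bernoulliMeasure 1 0 p)
    (c := √(1 / δ)) (by positivity)
  simp only [integral_bernoulliMeasure, smul_eq_mul, mul_one, mul_zero, add_zero] at h
  exact h.trans (ENNReal.ofReal_le_ofReal hvar)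

end Bernoulli

section Separation

variable {E : Type*} [NormedAddCommGroup E] [InnerProductSpace ℝ E] {z μ : E}

lemma norm_sq_add_le_norm_add_smul_sq {s B : ℝ} (hs : 0 ≤ s) (hinner : |⟪μ, z⟫| ≤ B * ‖μ‖) :
    ‖z‖ ^ 2 + s * ‖μ‖ * (s * ‖μ‖ - 2 * B) ≤ ‖z + s • μ‖ ^ 2 := by
  have hcross : -(s * (B * ‖μ‖)) ≤ s * ⟪μ, z⟫ := by
    rw [← mul_neg]
    exact mul_le_mul_of_nonneg_left (abs_le.1 hinner).1 hs
  rw [norm_add_sq_real, inner_smul_right, real_inner_comm, norm_smul, norm_of_nonneg hs]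
  linarith

lemma add_mul_sqrt_lt_norm_add_smul_sq {M B ρ r a s D : ℝ} (hD : 1 ≤ D) (hμ : ‖μ‖ ≤ M)
    (hsep : ((M + 2) * B + √(r + ρ)) * D ^ (1 / 4 : ℝ) ≤ a * ‖μ‖)
    (hz : |‖z‖ ^ 2 - D| < ρ * √D) (hinner : |⟪μ, z⟫| < B * ‖μ‖) (hs : |s - a| < B) :
    D + r * √D < ‖z + s • μ‖ ^ 2 := by
  set q := D ^ (1 / 4 : ℝ)
  set R := √(r + ρ)
  have hq : 1 ≤ q := one_le_rpow hD (by norm_num)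
  have hq_sq : q ^ 2 = √D := by
    rw [← rpow_natCast, ← rpow_mul (by linarith), sqrt_eq_rpow]
    norm_num
  have hR : 0 ≤ R := sqrt_nonneg _
  have hR_sq : r + ρ ≤ R ^ 2 := (sqrt_le_iff.1 le_rfl).2
  have hB : 0 < B := (abs_nonneg _).trans_lt hs
  have hsignal : (2 * B + R) * q ≤ s * ‖μ‖ := by
    have hloss : (a - s) * ‖μ‖ ≤ B * M * q := by
      have : (a - s) * ‖μ‖ ≤ B * M :=
        mul_le_mul (by linarith [(abs_lt.1 hs).1]) hμ (norm_nonneg μ) hB.le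
      exact this.trans (le_mul_of_one_le_right (mul_nonneg hB.le ((norm_nonneg μ).trans hμ)) hq)
    linarith
  have hs_nonneg : 0 ≤ s := by
    by_contra! hneg
    nlinarith [norm_nonneg μ]
  calc D + r * √D < ‖z‖ ^ 2 + (r + ρ) * √D := by linarith [(abs_lt.1 hz).1]
    _ ≤ ‖z‖ ^ 2 + R * q * (R * q) := by
      rw [mul_mul_mul_comm, ← sq, ← sq, hq_sq]
      gcongr
    _ ≤ ‖z‖ ^ 2 + s * ‖μ‖ * (s * ‖μ‖ - 2 * B) := by
      have hRq : 0 ≤ R * q := by positivity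
      have hgap : R * q ≤ s * ‖μ‖ - 2 * B := by
        linarith [le_mul_of_one_le_right hB.le hq]
      linarith [mul_le_mul (by linarith : R * q ≤ s * ‖μ‖) hgap hRq (by linarith)]
    _ ≤ ‖z + s • μ‖ ^ 2 := norm_sq_add_le_norm_add_smul_sq hs_nonneg hinner.le

end Separation

/-- The separation, in units of `D ^ (1 / 4)`, at which a random shift along a vector of norm at
most `M` is detected by the squared norm: the first term absorbs the fluctuations of the shift and
of its inner product with the noise, the second one those of the squared norm of the noise and the
excess `r` of the threshold. -/
def separationConst (M r δ : ℝ) : ℝ :=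
  (M + 2) * √(1 / δ) + √(r + √(2 / δ))

lemma separationConst_pos {M δ : ℝ} (hM : 0 ≤ M) (r : ℝ) (hδ : 0 < δ) :
    0 < separationConst M r δ := by
  unfold separationConst
  positivity

section Power

open Module

variable {E : Type*} [NormedAddCommGroup E] [InnerProductSpace ℝ E] [FiniteDimensional ℝ E]
  [MeasurableSpace E] [BorelSpace E] [Nontrivial E]

lemma stdGaussian_prod_norm_add_smul_sq_le {κ : Measure ℝ} [IsProbabilityMeasure κ] {M r δ a : ℝ}
    {μ : E} (hδ : 0 < δ) (hκ : κ {s | √(1 / δ) ≤ |s - a|} ≤ ENNReal.ofReal δ) (hμ : ‖μ‖ ≤ M)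
    (hsep : separationConst M r δ * (finrank ℝ E : ℝ) ^ (1 / 4 : ℝ) ≤ a * ‖μ‖) :
    ((stdGaussian E).prod κ) {p | ‖p.1 + p.2 • μ‖ ^ 2 ≤ finrank ℝ E + r * √(finrank ℝ E)} ≤
      ENNReal.ofReal (3 * δ) := by
  set A : Set E := {z | √(2 / δ) * √(finrank ℝ E) ≤ |‖z‖ ^ 2 - finrank ℝ E|}
  set B : Set E := {z | √(1 / δ) * ‖μ‖ ≤ |⟪μ, z⟫|}
  set S : Set ℝ := {s | √(1 / δ) ≤ |s - a|}
  have hdim : 1 ≤ (finrank ℝ E : ℝ) := by exact_mod_cast finrank_pos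
  have hμ_ne : μ ≠ 0 := by
    rintro rfl
    have hC := separationConst_pos ((norm_nonneg (0 : E)).trans hμ) r hδ
    rw [norm_zero, mul_zero] at hsep
    exact hsep.not_gt (by positivity)
  have hcover : ∀ p : E × ℝ, ‖p.1 + p.2 • μ‖ ^ 2 ≤ finrank ℝ E + r * √(finrank ℝ E) →
      p.1 ∈ A ∪ B ∨ p.2 ∈ S := by
    rintro ⟨z, s⟩ hp
    contrapose! hp
    obtain ⟨hA, hB⟩ := not_or.1 hp.1
    exact add_mul_sqrt_lt_norm_add_smul_sq hdim hμ hsep (not_le.1 hA) (not_le.1 hB)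
      (not_le.1 hp.2)
  calc ((stdGaussian E).prod κ) {p | ‖p.1 + p.2 • μ‖ ^ 2 ≤ finrank ℝ E + r * √(finrank ℝ E)}
      ≤ stdGaussian E (A ∪ B) + κ S := measure_prod_le_add _ _ hcover
    _ ≤ stdGaussian E A + stdGaussian E B + κ S := by
        gcongr
        exact measure_union_le A B
    _ ≤ ENNReal.ofReal δ + ENNReal.ofReal δ + ENNReal.ofReal δ := by
        gcongr
        · exact stdGaussian_sqrt_mul_sqrt_le_abs_norm_sq_sub_finrank_le hδ
        · exact stdGaussian_sqrt_mul_norm_le_abs_inner_le hμ_ne hδ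
    _ = ENNReal.ofReal (3 * δ) := by
        rw [← ENNReal.ofReal_add hδ.le hδ.le, ← ENNReal.ofReal_add (by positivity) hδ.le]
        congr 1
        ring

end Power

section Test

variable {d n : ℕ}

lemma gaussMeasure_eq_stdGaussian (d : ℕ) :
    gaussMeasure d = stdGaussian (EuclideanSpace ℝ (Fin d)) := by
  rw [stdGaussian_eq_withDensity, finrank_euclideanSpace_fin]
  rfl

lemma nullLaw_eq_pi_stdGaussian (d n : ℕ) :
    nullLaw d n = Measure.pi fun _ : Fin n => stdGaussian (EuclideanSpace ℝ (Fin d)) := by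
  rw [nullLaw, gaussMeasure_eq_stdGaussian]

lemma gaussDensity_nonneg (d : ℕ) (x : EuclideanSpace ℝ (Fin d)) : 0 ≤ gaussDensity d x := by
  unfold gaussDensity
  positivity

lemma measurable_gaussDensity (d : ℕ) : Measurable (gaussDensity d) := by
  unfold gaussDensity
  fun_prop

lemma map_add_right_gaussMeasure (d : ℕ) (μ : EuclideanSpace ℝ (Fin d)) :
    (gaussMeasure d).map (· + μ) =
      volume.withDensity fun x => ENNReal.ofReal (gaussDensity d (x - μ)) := by
  have h := map_withDensity_comp (measurePreserving_add_right volume μ)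
    (f := fun x => ENNReal.ofReal (gaussDensity d (x - μ)))
    ((measurable_gaussDensity d).comp (by fun_prop)).ennreal_ofReal
  simpa only [gaussMeasure, Function.comp_def, add_sub_cancel_right] using h

lemma mixMeasure_eq_map (d : ℕ) (p : unitInterval) (μ : EuclideanSpace ℝ (Fin d)) :
    mixMeasure d p μ =
      ((stdGaussian _).prod Ber((1 : ℝ), 0, p)).map fun q => q.1 + q.2 • μ := by
  have hf : Measurable fun x => ENNReal.ofReal (gaussDensity d x) :=
    (measurable_gaussDensity d).ennreal_ofReal
  have hf_shift : Measurable fun x => ENNReal.ofReal (gaussDensity d (x - μ)) :=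
    hf.comp (measurable_sub_const μ)
  rw [map_prod_bernoulliMeasure _ _ _ _ (by fun_prop), ← gaussMeasure_eq_stdGaussian]
  simp only [one_smul, zero_smul, add_zero, Measure.map_id', map_add_right_gaussMeasure]
  rw [gaussMeasure, mixMeasure, add_comm, ENNReal.smul_def, ENNReal.smul_def,
    ← withDensity_smul _ hf, ← withDensity_smul _ hf_shift,
    ← withDensity_add_left (hf.const_smul _)]
  congr with x
  have hp : 0 ≤ 1 - (p : ℝ) := sub_nonneg.2 p.2.2
  rw [ENNReal.ofReal_add (mul_nonneg hp (gaussDensity_nonneg d x))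
    (mul_nonneg p.2.1 (gaussDensity_nonneg d _)), ENNReal.ofReal_mul hp, ENNReal.ofReal_mul p.2.1,
    ENNReal.ofReal_eq_coe_nnreal hp, ENNReal.ofReal_eq_coe_nnreal p.2.1]
  rfl

lemma chiStat_eq_norm_normalizedSum_sq (d n : ℕ) :
    chiStat d n = (fun x => ‖x‖ ^ 2) ∘ normalizedSum := by
  ext X
  rw [Function.comp_apply, chiStat, normalizedSum, smul_smul, ← div_eq_mul_inv, sqrt_div_self',
    one_div, Fintype.card_fin]

lemma measurable_chiStat (d n : ℕ) : Measurable (chiStat d n) := by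
  rw [chiStat_eq_norm_normalizedSum_sq]
  exact (measurable_norm.pow_const 2).comp measurable_normalizedSum

lemma upsilon_eq_upperQuantile_norm_sq_stdGaussian (d : ℕ) [NeZero n] (α : ℝ) :
    upsilon d n α = upperQuantile (stdGaussian (EuclideanSpace ℝ (Fin d))) (fun x => ‖x‖ ^ 2)
      (ENNReal.ofReal α) := by
  rw [← map_normalizedSum_pi_stdGaussian (ι := Fin n), upperQuantile_map _ measurable_normalizedSum
    (by fun_prop), ← chiStat_eq_norm_normalizedSum_sq, ← nullLaw_eq_pi_stdGaussian]
  rfl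

lemma nullLaw_upsilon_lt_chiStat_le (d n : ℕ) {α : ℝ} (hα : 0 < α) :
    nullLaw d n {X | upsilon d n α < chiStat d n X} ≤ ENNReal.ofReal α := by
  have : IsProbabilityMeasure (nullLaw d n) := by
    rw [nullLaw_eq_pi_stdGaussian]
    infer_instance
  exact measure_upperQuantile_lt_le _ (measurable_chiStat d n) (by simpa using hα)

lemma map_normalizedSum_mixLaw [NeZero n] (p : unitInterval) (μ : EuclideanSpace ℝ (Fin d)) :
    (mixLaw d n p μ).map normalizedSum =
      ((stdGaussian _).prod ((Measure.pi fun _ : Fin n => Ber((1 : ℝ), 0, p)).map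
        normalizedSum)).map fun q => q.1 + q.2 • μ := by
  simp only [mixLaw, mixMeasure_eq_map]
  rw [map_normalizedSum_pi_map_add_smul, map_normalizedSum_pi_stdGaussian]

lemma mixLaw_chiStat_le_upsilon_le [NeZero d] [NeZero n] {M α δ : ℝ} (hα : α ∈ Set.Ioo (0 : ℝ) 1)
    (hδ : 0 < δ) (p : unitInterval) {μ : EuclideanSpace ℝ (Fin d)} (hμ : ‖μ‖ ≤ M)
    (hsep : separationConst M √(2 / α) δ * (d : ℝ) ^ (1 / 4 : ℝ) ≤ √n * p * ‖μ‖) :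
    mixLaw d n p μ {X | chiStat d n X ≤ upsilon d n α} ≤ ENNReal.ofReal (3 * δ) := by
  set κ := (Measure.pi fun _ : Fin n => Ber((1 : ℝ), 0, p)).map normalizedSum
  have hκ : κ {s | √(1 / δ) ≤ |s - √n * p|} ≤ ENNReal.ofReal δ := by
    simpa only [Fintype.card_fin] using
      map_normalizedSum_pi_bernoulliMeasure_le_abs_sub_le (ι := Fin n) p hδ
  have : IsProbabilityMeasure κ :=
    Measure.isProbabilityMeasure_map measurable_normalizedSum.aemeasurable
  have hpower := stdGaussian_prod_norm_add_smul_sq_le (E := EuclideanSpace ℝ (Fin d)) hδ hκ hμ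
    (by simpa using hsep)
  have hquantile : upsilon d n α ≤ d + √(2 / α) * √d := by
    rw [upsilon_eq_upperQuantile_norm_sq_stdGaussian]
    simpa using upperQuantile_norm_sq_stdGaussian_le (E := EuclideanSpace ℝ (Fin d)) hα
  calc mixLaw d n p μ {X | chiStat d n X ≤ upsilon d n α}
      = (mixLaw d n p μ).map normalizedSum {x | ‖x‖ ^ 2 ≤ upsilon d n α} := by
        rw [Measure.map_apply measurable_normalizedSum
          (measurableSet_le (by fun_prop) (by fun_prop)), chiStat_eq_norm_normalizedSum_sq]
        rfl
    _ = (stdGaussian _).prod κ {q | ‖q.1 + q.2 • μ‖ ^ 2 ≤ upsilon d n α} := by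
        rw [map_normalizedSum_mixLaw, Measure.map_apply (by fun_prop)
          (measurableSet_le (by fun_prop) (by fun_prop))]
        rfl
    _ ≤ ENNReal.ofReal (3 * δ) := by
        refine (measure_mono fun q hq => ?_).trans hpower
        simpa using hq.trans hquantile

end Test

/-- **Theorem (first testing procedure for `F₂[M]`).**
The test `Ψ₁ = 1{‖√n·X̄ₙ‖² > υ_α}` is of level `α`, and there is a positive constant
`C(α,β,M)` depending only on `α, β, M` such that for every `ρ ≥ C(α,β,M)·d^{1/4}/√n`
and every `f_{(ε,μ)} ∈ F₂[M]` with `ε‖μ‖ ≥ ρ`, the second-kind error `P_f(Ψ₁ = 0)`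
is at most `β`. -/
theorem upperBound_mean_test (M α β : ℝ) (hM : 0 < M)
    (hα : α ∈ Set.Ioo (0 : ℝ) 1) (hβ : β ∈ Set.Ioo (0 : ℝ) 1) :
    (∀ d n : ℕ, 1 ≤ d → 1 ≤ n →
      nullLaw d n {X | upsilon d n α < chiStat d n X} ≤ ENNReal.ofReal α) ∧
    ∃ C : ℝ, 0 < C ∧ ∀ d n : ℕ, 1 ≤ d → 1 ≤ n → ∀ ρ : ℝ,
      C * (d : ℝ) ^ ((1 : ℝ) / 4) / Real.sqrt n ≤ ρ →
      ∀ (ε : ℝ) (μ : EuclideanSpace ℝ (Fin d)), ε ∈ Set.Ioo (0 : ℝ) 1 → ‖μ‖ ≤ M →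
        ρ ≤ ε * ‖μ‖ →
        mixLaw d n ε μ {X | ¬ upsilon d n α < chiStat d n X} ≤ ENNReal.ofReal β := by
  have hδ : 0 < β / 3 := by linarith [hβ.1]
  refine ⟨fun d n _ _ => nullLaw_upsilon_lt_chiStat_le d n hα.1,
    separationConst M √(2 / α) (β / 3), separationConst_pos hM.le _ hδ, ?_⟩
  intro d n hd hn ρ hρ ε μ hε hμ hρμ
  have : NeZero d := ⟨by lia⟩
  have : NeZero n := ⟨by lia⟩
  have hsqrt : 0 < √(n : ℝ) := sqrt_pos.2 (by exact_mod_cast hn)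
  have hsep : separationConst M √(2 / α) (β / 3) * (d : ℝ) ^ (1 / 4 : ℝ) ≤ √n * ε * ‖μ‖ := by
    rw [mul_assoc, ← div_le_iff₀' hsqrt]
    exact hρ.trans hρμ
  have h := mixLaw_chiStat_le_upsilon_le hα hδ ⟨ε, Set.Ioo_subset_Icc_self hε⟩ hμ hsep
  simpa only [not_lt, mul_div_cancel₀ β (three_ne_zero' ℝ)] using h

end
end

section
/- Let (Z₁,…,Zₙ) be i.i.d. real random variables with density g, with order statistics Z_(1) ≤ … ≤ Z_(n), and let G₁[M] = {z ↦ (1−ε)φ(z) + ε·φ(z−τ) : ε ∈ (0,1), 0 < τ ≤ M}. Let K_n = {2^j : 0 ≤ j ≤ ⌊log₂(n/2)⌋}, for u ∈ (0,1) let z_{u,k} be the (1−u)-quantile of Z_(n−k+1) under the standard Gaussian null, α_n = sup{u ∈ (0,1) : P_{H₀}(∃k ∈ K_n, Z_(n−k+1) > z_{u,k}) ≤ α}, and T_α = sup_{k∈K_n} 1{Z_(n−k+1) > z_{α_n,k}}. Let β ∈ (0, 1−α). Assume n ≥ 3 and 8.25·ln(2·log₂(n/2)/α)/n ≤ ∫_M^∞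 φ(x) dx. Then there exists a positive constant C(β,M) depending only on β and M such that for every ρ ≥ C(β,M)·√( ln ln(n)·ln(1/α)/n ), one has sup P_g(T_α = 0) ≤ β, the supremum being over all g = (1−ε)φ + εφ(·−τ) ∈ G₁[M] with ε·τ ≥ ρ. -/
open MeasureTheory Real

noncomputable section

/-- The standard Gaussian density `φ = φ₁` on `ℝ`. -/
def gaussDensity1 (x : ℝ) : ℝ := (Real.sqrt (2 * π))⁻¹ * Real.exp (-x ^ 2 / 2)

/-- The two-component unidimensional Gaussian mixture measure with density
`z ↦ (1-ε)·φ(z) + ε·φ(z-τ)`. -/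
def mixMeasure1 (ε τ : ℝ) : Measure ℝ :=
  volume.withDensity fun z =>
    ENNReal.ofReal ((1 - ε) * gaussDensity1 z + ε * gaussDensity1 (z - τ))

open scoped Classical in
/-- The `k`-th order statistic `Z_(k)` of the sample `z` (1-indexed):
the smallest `t` such that at least `k` of the `zᵢ` are `≤ t`. -/
def orderStat {n : ℕ} (z : Fin n → ℝ) (k : ℕ) : ℝ :=
  sInf {t : ℝ | k ≤ (Finset.univ.filter fun i => z i ≤ t).card}

/-- The set `K_n = {2^j : 0 ≤ j ≤ ⌊log₂(n/2)⌋}`. -/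
def Kset (n : ℕ) : Finset ℕ := (Finset.range (Nat.log 2 (n / 2) + 1)).image (2 ^ ·)

/-- Law of an i.i.d. `n`-sample of standard Gaussian real random variables
(the null `H₀`). -/
def nullPi (n : ℕ) : Measure (Fin n → ℝ) :=
  Measure.pi fun _ : Fin n => ProbabilityTheory.gaussianReal 0 1

/-- `z_{u,k}`, the `(1-u)`-quantile of the order statistic `Z_(n-k+1)` under the
standard Gaussian null. -/
def quant (n : ℕ) (u : ℝ) (k : ℕ) : ℝ :=
  sInf {t : ℝ | nullPi n {z | t < orderStat z (n - k + 1)} ≤ ENNReal.ofReal u}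

/-- The corrected level
`α_n = sup{u ∈ (0,1) : P_{H₀}(∃ k ∈ K_n, Z_(n-k+1) > z_{u,k}) ≤ α}`. -/
def alphaCorr (n : ℕ) (α : ℝ) : ℝ :=
  sSup {u : ℝ | u ∈ Set.Ioo (0 : ℝ) 1 ∧
    nullPi n {z | ∃ k ∈ Kset n, quant n u k < orderStat z (n - k + 1)} ≤ ENNReal.ofReal α}

/-- Rejection region of the unidimensional order-statistics test
`T_α = sup_{k ∈ K_n} 1{Z_(n-k+1) > z_{α_n,k}}`. -/
def rejRegion1d (n : ℕ) (α : ℝ) : Set (Fin n → ℝ) :=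
  {z | ∃ k ∈ Kset n, quant n (alphaCorr n α) k < orderStat z (n - k + 1)}

/-! One order statistic suffices: take `k ∈ K_n` with `1/4 ≤ k/n ≤ 1/2`. Bonferroni gives
`α_n ≥ α / |K_n|`, so by Hoeffding's inequality the critical value `z_{α_n,k}` is at most the point
`t` at which the Gaussian tail is `k/n - δ`, where `δ` is of order `√(log (|K_n| / α) / n)`. Again
by Hoeffding's inequality, `Z_(n-k+1) > t` holds with probability at least `1 - β` under the mixture
as soon as its tail at `t` is at least `k/n + δ'`, with `δ'` of order `√(log (1 / β) / n)`. The
mixture shifts mass `ε · P(t - τ < Z ≤ t)` across `t`, which is of order `ε τ` because `t` stays in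
a fixed compact set, and `δ + δ'` is at most a constant times `√(log log n · log (1 / α) / n)`.
Since `ε τ ≤ M`, a large `C` also forces `δ ≤ 1/8`, which keeps `k/n - δ` away from `0`. -/

open ProbabilityTheory Set Filter
open scoped Finset Topology ENNReal NNReal

/-! ### Order statistics -/

lemma eventually_card_filter_le_eq {ι R : Type*} [Fintype ι] [LinearOrder R] [TopologicalSpace R]
    [OrderTopology R] (z : ι → R) (t : R) :
    ∀ᶠ s in 𝓝[>] t, #{i | z i ≤ s} = #{i | z i ≤ t} := by
  have hpoint : ∀ᶠ s in 𝓝[>] t, ∀ i, z i ≤ s ↔ z i ≤ t := by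
    refine eventually_all.mpr fun i => ?_
    rcases le_or_gt (z i) t with hi | hi
    · filter_upwards [self_mem_nhdsWithin] with s hs
      exact iff_of_true (hi.trans (le_of_lt hs)) hi
    · filter_upwards [Ioo_mem_nhdsGT hi] with s hs
      exact iff_of_false (not_le.mpr hs.2) (not_le.mpr hi)
  filter_upwards [hpoint] with s hs
  simp only [hs]

lemma orderStat_le_iff {n j : ℕ} (z : Fin n → ℝ) (hj : 1 ≤ j) (hjn : j ≤ n) (t : ℝ) :
    orderStat z j ≤ t ↔ j ≤ #{i | z i ≤ t} := by
  set S : Set ℝ := {t | j ≤ #{i | z i ≤ t}}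
  have hS_nonempty : S.Nonempty := by
    obtain ⟨b, hb⟩ := (finite_range z).bddAbove
    refine ⟨b, ?_⟩
    have hall : ∀ i, z i ≤ b := fun i => hb ⟨i, rfl⟩
    simpa [S, hall] using hjn
  have hS_bddBelow : BddBelow S := by
    obtain ⟨a, ha⟩ := (finite_range z).bddBelow
    refine ⟨a, fun s hs => ?_⟩
    obtain ⟨i, hi⟩ := Finset.card_pos.mp (hj.trans hs)
    exact (ha ⟨i, rfl⟩).trans (Finset.mem_filter.mp hi).2
  refine ⟨fun h => ?_, fun h => csInf_le hS_bddBelow h⟩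
  obtain ⟨s, hs, hts⟩ := ((eventually_card_filter_le_eq z t).and self_mem_nhdsWithin).exists
  obtain ⟨r, hr, hrs⟩ := exists_lt_of_csInf_lt hS_nonempty (h.trans_lt hts)
  rw [← hs]
  exact le_trans hr <|
    Finset.card_le_card (Finset.monotone_filter_right _ fun _ _ hi => hi.trans hrs.le)

lemma lt_orderStat_iff {n k : ℕ} (z : Fin n → ℝ) (hk : 1 ≤ k) (hkn : k ≤ n) (t : ℝ) :
    t < orderStat z (n - k + 1) ↔ k ≤ #{i | t < z i} := by
  have hcard := Finset.card_filter_add_card_filter_not (s := Finset.univ) fun i => z i ≤ t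
  simp only [not_le, Finset.card_univ, Fintype.card_fin] at hcard
  rw [← not_le, orderStat_le_iff z (by omega) (by omega)]
  omega

lemma measurable_orderStat {n j : ℕ} (hj : 1 ≤ j) (hjn : j ≤ n) :
    Measurable fun z : Fin n → ℝ => orderStat z j := by
  refine measurable_of_Iic fun t => ?_
  have hpreimage : (fun z : Fin n → ℝ => orderStat z j) ⁻¹' Iic t =
      {z | j ≤ ∑ i, if z i ≤ t then 1 else 0} := by
    ext z
    rw [mem_preimage, mem_Iic, orderStat_le_iff z hj hjn, Finset.card_filter, mem_ofPred_eq]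
  rw [hpreimage]
  refine measurableSet_le measurable_const (Finset.measurable_sum _ fun i _ => ?_)
  exact Measurable.ite (measurableSet_le (measurable_pi_apply i) measurable_const)
    measurable_const measurable_const

/-! ### Hoeffding's inequality for counts -/

lemma measureReal_pi_le_card_filter_mem_le {ι E : Type*} [Fintype ι] [MeasurableSpace E]
    (ν : Measure E) [IsProbabilityMeasure ν] {s : Set E} [DecidablePred (· ∈ s)]
    (hs : MeasurableSet s) {δ : ℝ} (hδ : 0 ≤ δ) :
    (Measure.pi fun _ : ι => ν).real
        {z | Fintype.card ι * (ν.real s + δ) ≤ #{i | z i ∈ s}} ≤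
      exp (-2 * Fintype.card ι * δ ^ 2) := by
  set X : E → ℝ := s.indicator 1
  have hX : Measurable X := measurable_one.indicator hs
  have hindep : iIndepFun (fun (i : ι) (z : ι → E) => X (z i) - ν.real s)
      (Measure.pi fun _ : ι => ν) :=
    iIndepFun_pi (X := fun _ x => X x - ν.real s) fun _ => (hX.sub_const _).aemeasurable
  have hsubG : ∀ i ∈ (Finset.univ : Finset ι), HasSubgaussianMGF
      (fun z : ι → E => X (z i) - ν.real s) ((‖(1 : ℝ) - 0‖₊ / 2) ^ 2)
      (Measure.pi fun _ : ι => ν) := by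
    intro i _
    have hoeffding_lemma := hasSubgaussianMGF_of_mem_Icc (a := 0) (b := 1)
      (μ := Measure.pi fun _ : ι => ν) (X := fun z => X (z i))
      (hX.comp (measurable_pi_apply i)).aemeasurable
      (Eventually.of_forall fun z => by by_cases hz : z i ∈ s <;> simp [X, hz])
    rwa [integral_comp_eval (μ := fun _ : ι => ν) (f := X) hX.aestronglyMeasurable,
      integral_indicator_one hs] at hoeffding_lemma
  have hsum (z : ι → E) : ∑ i, (X (z i) - ν.real s) =
      #{i | z i ∈ s} - Fintype.card ι * ν.real s := by
    simp [X, indicator_apply]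
  calc _ = (Measure.pi fun _ : ι => ν).real
        {z | Fintype.card ι * δ ≤ ∑ i, (X (z i) - ν.real s)} := by
        simp only [hsum, le_sub_iff_add_le', mul_add]
    _ ≤ _ := HasSubgaussianMGF.measure_sum_ge_le_of_iIndepFun hindep hsubG (by positivity)
    _ = _ := by
        rcases eq_or_ne (Fintype.card ι : ℝ) 0 with h | h
        · simp [h]
        · congr 1
          simp
          field_simp

/-- The deviation `δ` at which Hoeffding's bound `exp (-2 n δ²)` for the mean of `n` independent
variables with values in `[0, 1]` equals `η`. -/
def hoeffdingRadius (n : ℕ) (η : ℝ) : ℝ := √(log (1 / η) / (2 * n))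

lemma hoeffdingRadius_nonneg (n : ℕ) (η : ℝ) : 0 ≤ hoeffdingRadius n η := sqrt_nonneg _

lemma exp_neg_two_mul_hoeffdingRadius_sq {n : ℕ} (hn : 0 < n) {η : ℝ} (hη : η ∈ Ioc 0 1) :
    exp (-2 * n * hoeffdingRadius n η ^ 2) = η := by
  have hlog : 0 ≤ log (1 / η) := log_nonneg (one_le_one_div hη.1 hη.2)
  have hexponent : -2 * n * (log (1 / η) / (2 * n)) = log η := by
    rw [one_div, log_inv]
    field_simp
  rw [hoeffdingRadius, sq_sqrt (by positivity), hexponent, exp_log hη.1]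

lemma hoeffdingRadius_add_le (n : ℕ) {η η' : ℝ} (hη : η ∈ Ioc 0 1) (hη' : η' ∈ Ioc 0 1) :
    hoeffdingRadius n η + hoeffdingRadius n η' ≤ √((log (1 / η) + log (1 / η')) / n) := by
  have hlog : 0 ≤ log (1 / η) := log_nonneg (one_le_one_div hη.1 hη.2)
  have hlog' : 0 ≤ log (1 / η') := log_nonneg (one_le_one_div hη'.1 hη'.2)
  refine le_sqrt_of_sq_le (add_sq_le.trans_eq ?_)
  rw [hoeffdingRadius, hoeffdingRadius, sq_sqrt (by positivity), sq_sqrt (by positivity)]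
  field_simp

lemma measure_pi_le_card_filter_mem_le {n : ℕ} (hn : 0 < n) {E : Type*} [MeasurableSpace E]
    (ν : Measure E) [IsProbabilityMeasure ν] {s : Set E} [DecidablePred (· ∈ s)]
    (hs : MeasurableSet s) {η : ℝ} (hη : η ∈ Ioc 0 1) {m : ℕ}
    (hm : ν.real s + hoeffdingRadius n η ≤ m / n) :
    Measure.pi (fun _ : Fin n => ν) {z | m ≤ #{i | z i ∈ s}} ≤ ENNReal.ofReal η := by
  have hmul : n * (ν.real s + hoeffdingRadius n η) ≤ m := (le_div_iff₀' (by positivity)).mp hm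
  have hoeffding := measureReal_pi_le_card_filter_mem_le (ι := Fin n) ν hs
    (hoeffdingRadius_nonneg n η)
  rw [Fintype.card_fin, exp_neg_two_mul_hoeffdingRadius_sq hn hη] at hoeffding
  refine ENNReal.le_ofReal_iff_toReal_le (measure_ne_top _ _) hη.1.le |>.mpr
    (le_trans (measureReal_mono fun z hz => ?_) hoeffding)
  exact hmul.trans (Nat.cast_le.mpr hz)

section OrderStatDeviation

variable {n k : ℕ} (hk : 1 ≤ k) (hkn : k ≤ n) (ν : Measure ℝ) [IsProbabilityMeasure ν] {η t : ℝ}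
  (hη : η ∈ Ioc 0 1)
include hk hkn hη

lemma measure_pi_lt_orderStat_le (h : ν.real (Ioi t) + hoeffdingRadius n η ≤ k / n) :
    Measure.pi (fun _ : Fin n => ν) {z | t < orderStat z (n - k + 1)} ≤ ENNReal.ofReal η := by
  simp only [lt_orderStat_iff _ hk hkn]
  exact measure_pi_le_card_filter_mem_le (by omega) ν measurableSet_Ioi hη h

lemma measure_pi_orderStat_le_le (h : k / n + hoeffdingRadius n η ≤ ν.real (Ioi t)) :
    Measure.pi (fun _ : Fin n => ν) {z | orderStat z (n - k + 1) ≤ t} ≤ ENNReal.ofReal η := by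
  have hn : (n : ℝ) ≠ 0 := Nat.cast_ne_zero.mpr (by omega)
  simp only [orderStat_le_iff _ (Nat.le_add_left 1 (n - k)) (by omega : n - k + 1 ≤ n)]
  refine (measure_mono fun z hz => (Nat.le_succ (n - k)).trans hz).trans
    (measure_pi_le_card_filter_mem_le (s := Iic t) (by omega) ν measurableSet_Iic hη ?_)
  rw [← compl_Ioi, probReal_compl_eq_one_sub measurableSet_Ioi, Nat.cast_sub hkn, sub_div,
    div_self hn]
  linarith

end OrderStatDeviation

/-! ### Tails and quantiles of measures on the real line -/

lemma tendsto_measure_Ioi_atTop_zero (ν : Measure ℝ) [IsFiniteMeasure ν] :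
    Tendsto (fun t => ν (Ioi t)) atTop (𝓝 0) := by
  have hempty : ⋂ t : ℝ, Ioi t = ∅ := eq_empty_of_forall_notMem fun x hx =>
    lt_irrefl x (mem_iInter.mp hx x)
  simpa only [hempty, measure_empty] using! tendsto_measure_iInter_atTop (μ := ν)
    (fun _ => measurableSet_Ioi.nullMeasurableSet) antitone_Ioi ⟨0, measure_ne_top _ _⟩

lemma measure_Ioi_sInf_le (ν : Measure ℝ) [IsFiniteMeasure ν] {u : ℝ≥0∞} (hu : 0 < u) :
    ν (Ioi (sInf {t | ν (Ioi t) ≤ u})) ≤ u := by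
  set q := sInf {t | ν (Ioi t) ≤ u}
  have hnonempty : {t | ν (Ioi t) ≤ u}.Nonempty :=
    ((tendsto_measure_Ioi_atTop_zero ν).eventually_le_const hu).exists
  have habove : ∀ t, q < t → ν (Ioi t) ≤ u := fun t ht => by
    obtain ⟨s, hs, hst⟩ := exists_lt_of_csInf_lt hnonempty ht
    exact (measure_mono (Ioi_subset_Ioi hst.le)).trans hs
  obtain ⟨v, hv, hqv, hvq⟩ := exists_seq_strictAnti_tendsto q
  rw [← (isGLB_of_tendsto_atTop hv.antitone hvq).iUnion_Ioi_eq,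
    Monotone.measure_iUnion fun _ _ h => Ioi_subset_Ioi (hv.antitone h)]
  exact iSup_le fun m => habove _ (hqv m)

lemma exists_mem_Icc_measureReal_Ioi_eq (ν : Measure ℝ) [IsFiniteMeasure ν] [NullSingletonClass ν]
    {a b p : ℝ} (hab : a ≤ b) (hp : p ∈ Icc (ν.real (Ioi b)) (ν.real (Ioi a))) :
    ∃ t ∈ Icc a b, ν.real (Ioi t) = p := by
  have hcont : ContinuousOn (fun t => ν.real (Ioi t)) (Ici a) := by
    simpa using (integrable_const (1 : ℝ)).integrableOn.continuousOn_Ici_primitive_Ioi (μ := ν)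
  exact intermediate_value_Icc' hab (hcont.mono Icc_subset_Ici_self) hp

/-! ### The critical values -/

instance (n : ℕ) : IsProbabilityMeasure (nullPi n) := by
  unfold nullPi
  infer_instance

lemma nullPi_quant_lt_orderStat_le {n k : ℕ} (hk : 1 ≤ k) (hkn : k ≤ n) {u : ℝ} (hu : 0 < u) :
    nullPi n {z | quant n u k < orderStat z (n - k + 1)} ≤ ENNReal.ofReal u := by
  have hmeas : Measurable fun z : Fin n → ℝ => orderStat z (n - k + 1) :=
    measurable_orderStat (by omega) (by omega)
  have htail := measure_Ioi_sInf_le ((nullPi n).map fun z => orderStat z (n - k + 1))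
    (ENNReal.ofReal_pos.mpr hu)
  simpa only [Measure.map_apply hmeas measurableSet_Ioi] using! htail

/-- For `u ≥ 1` the set defining the quantile is unbounded below and its `sInf` is the junk
value `0`. -/
lemma quant_le_of_nonneg {n k : ℕ} {u t : ℝ} (ht : 0 ≤ t)
    (h : nullPi n {z | t < orderStat z (n - k + 1)} ≤ ENNReal.ofReal u) : quant n u k ≤ t := by
  by_cases hbdd : BddBelow {t : ℝ | nullPi n {z | t < orderStat z (n - k + 1)} ≤ ENNReal.ofReal u}
  · exact csInf_le hbdd h
  · exact (Real.sInf_of_not_bddBelow hbdd).trans_le ht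

lemma two_pow_log_mem_Kset (n : ℕ) : 2 ^ Nat.log 2 (n / 2) ∈ Kset n :=
  Finset.mem_image_of_mem _ (by simp)

lemma card_Kset_pos (n : ℕ) : 0 < #(Kset n) := Finset.card_pos.mpr ⟨_, two_pow_log_mem_Kset n⟩

lemma mem_Icc_of_mem_Kset {n k : ℕ} (hn : 0 < n) (hk : k ∈ Kset n) : k ∈ Icc 1 n := by
  obtain ⟨j, hj, rfl⟩ := Finset.mem_image.mp hk
  refine ⟨Nat.one_le_two_pow, (pow_le_pow_right₀ one_le_two
    (Nat.lt_succ_iff.mp (Finset.mem_range.mp hj))).trans ?_⟩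
  rcases Nat.eq_zero_or_pos (n / 2) with h | h
  · rw [h, Nat.log_zero_right, pow_zero]
    exact hn
  · exact (Nat.pow_log_le_self 2 h.ne').trans (Nat.div_le_self n 2)

lemma exists_mem_Kset_div_mem_Icc {n : ℕ} (hn : 2 ≤ n) :
    ∃ k ∈ Kset n, (k / n : ℝ) ∈ Icc (1 / 4) (1 / 2) := by
  refine ⟨_, two_pow_log_mem_Kset n, ?_⟩
  have hn_pos : (0 : ℝ) < n := Nat.cast_pos.mpr (by omega)
  have hle := Nat.pow_log_le_self 2 (x := n / 2) (by omega)
  have hlt := Nat.lt_pow_succ_log_self one_lt_two (n / 2)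
  rw [pow_succ] at hlt
  rw [mem_Icc, div_le_div_iff₀ four_pos hn_pos, div_le_div_iff₀ hn_pos two_pos]
  constructor <;> norm_cast <;> omega

lemma card_Kset_le_log {n : ℕ} (hn : 2 ≤ n) : #(Kset n) ≤ Nat.log 2 n := by
  have hlog : 0 < Nat.log 2 n := Nat.log_pos one_lt_two hn
  refine Finset.card_image_le.trans ?_
  rw [Finset.card_range, Nat.log_div_base]
  omega

lemma log_card_Kset_le {n : ℕ} (hn : 2 ≤ n) : log #(Kset n) ≤ log 2 + log (log n) := by
  have hlog : 0 < log n := log_pos (by exact_mod_cast hn)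
  have hcard_pos : (0 : ℝ) < #(Kset n) := Nat.cast_pos.mpr (card_Kset_pos n)
  rw [← log_mul two_ne_zero hlog.ne']
  refine log_le_log hcard_pos ?_
  calc (#(Kset n) : ℝ) ≤ Nat.log 2 n := Nat.cast_le.mpr (card_Kset_le_log hn)
    _ ≤ logb 2 n := natLog_le_logb _ _
    _ ≤ 2 * log n := by
        rw [logb, div_le_iff₀ (log_pos one_lt_two)]
        nlinarith [log_two_gt_d9]

lemma div_card_Kset_mem_Ioo (n : ℕ) {α : ℝ} (hα : α ∈ Ioo 0 1) : α / #(Kset n) ∈ Ioo 0 1 := by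
  have hcard : (1 : ℝ) ≤ #(Kset n) := Nat.one_le_cast.mpr (card_Kset_pos n)
  exact ⟨div_pos hα.1 (by linarith), (div_le_self hα.1.le hcard).trans_lt hα.2⟩

lemma div_card_Kset_le_alphaCorr {n : ℕ} (hn : 0 < n) {α : ℝ} (hα : α ∈ Ioo 0 1) :
    α / #(Kset n) ≤ alphaCorr n α := by
  have hcard_ne : (#(Kset n) : ℝ) ≠ 0 := Nat.cast_ne_zero.mpr (card_Kset_pos n).ne'
  have hu := div_card_Kset_mem_Ioo n hα
  refine le_csSup ⟨1, fun u hu => hu.1.2.le⟩ ⟨hu, ?_⟩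
  set u := α / #(Kset n)
  calc nullPi n {z | ∃ k ∈ Kset n, quant n u k < orderStat z (n - k + 1)}
      = nullPi n (⋃ k ∈ Kset n, {z | quant n u k < orderStat z (n - k + 1)}) := by
        congr 1
        ext z
        simp
    _ ≤ ∑ k ∈ Kset n, nullPi n {z | quant n u k < orderStat z (n - k + 1)} :=
        measure_biUnion_finset_le _ _
    _ ≤ ∑ _k ∈ Kset n, ENNReal.ofReal u := Finset.sum_le_sum fun k hk =>
        have hkn := mem_Icc_of_mem_Kset hn hk
        nullPi_quant_lt_orderStat_le hkn.1 hkn.2 hu.1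
    _ = ENNReal.ofReal α := by
        rw [Finset.sum_const, ← ENNReal.ofReal_nsmul, nsmul_eq_mul, mul_div_cancel₀ _ hcard_ne]

lemma measure_pi_compl_rejRegion1d_le {n k : ℕ} (hn : 0 < n) (hk : k ∈ Kset n) {α β t : ℝ}
    (hα : α ∈ Ioo 0 1) (hβ : β ∈ Ioc 0 1) (ν : Measure ℝ) [IsProbabilityMeasure ν] (ht : 0 ≤ t)
    (hnull : (gaussianReal 0 1).real (Ioi t) + hoeffdingRadius n (α / #(Kset n)) ≤ k / n)
    (halt : k / n + hoeffdingRadius n β ≤ ν.real (Ioi t)) :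
    Measure.pi (fun _ : Fin n => ν) (rejRegion1d n α)ᶜ ≤ ENNReal.ofReal β := by
  obtain ⟨hk1, hkn⟩ := mem_Icc_of_mem_Kset hn hk
  have hlevel := Ioo_subset_Ioc_self (div_card_Kset_mem_Ioo n hα)
  have hquant : quant n (alphaCorr n α) k ≤ t := quant_le_of_nonneg ht <|
    (measure_pi_lt_orderStat_le hk1 hkn _ hlevel hnull).trans <|
      ENNReal.ofReal_le_ofReal (div_card_Kset_le_alphaCorr hn hα)
  refine (measure_mono fun z hz => ?_).trans (measure_pi_orderStat_le_le hk1 hkn ν hβ halt)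
  exact (not_lt.mp fun hlt => hz ⟨k, hk, hlt⟩).trans hquant

/-! ### Gaussian tails and the mixture -/

lemma gaussianReal_real_Ioi_self (m : ℝ) {v : ℝ≥0} (hv : v ≠ 0) :
    (gaussianReal m v).real (Ioi m) = 1 / 2 := by
  have := nullSingletonClass_gaussianReal (μ := m) hv
  have hreflect : (gaussianReal m v).real (Iic m) = (gaussianReal m v).real (Ici m) := by
    have hmap : (gaussianReal m v).map (2 * m - ·) = gaussianReal m v := by
      rw [gaussianReal_map_const_sub]
      congr 1
      ring
    conv_lhs => rw [← hmap, map_measureReal_apply (by fun_prop) measurableSet_Iic]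
    congr 1
    ext x
    simp only [mem_preimage, mem_Iic, mem_Ici]
    constructor <;> intro h <;> linarith
  have hcompl := probReal_compl_eq_one_sub (μ := gaussianReal m v) (measurableSet_Ioi (a := m))
  rw [compl_Ioi, hreflect, ← measureReal_congr Ioi_ae_eq_Ici] at hcompl
  linarith

lemma exists_forall_exists_gaussianReal_real_Ioi_eq (m : ℝ) {v : ℝ≥0} (hv : v ≠ 0) {q : ℝ}
    (hq : 0 < q) :
    ∃ T, ∀ p ∈ Icc q (1 / 2), ∃ t ∈ Icc m T, (gaussianReal m v).real (Ioi t) = p := by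
  obtain ⟨T, hT, hmT⟩ := (((tendsto_measure_Ioi_atTop_zero (gaussianReal m v)).eventually_le_const
    (ENNReal.ofReal_pos.mpr hq)).and (eventually_ge_atTop m)).exists
  have := nullSingletonClass_gaussianReal (μ := m) hv
  refine ⟨T, fun p hp => exists_mem_Icc_measureReal_Ioi_eq _ hmT ⟨?_, ?_⟩⟩
  · exact (ENNReal.toReal_le_of_le_ofReal hq.le hT).trans hp.1
  · exact hp.2.trans_eq (gaussianReal_real_Ioi_self m hv).symm

lemma gaussianPDFReal_zero_le_of_abs_le (v : ℝ≥0) {x R : ℝ} (h : |x| ≤ R) :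
    gaussianPDFReal 0 v R ≤ gaussianPDFReal 0 v x := by
  have hsq : x ^ 2 ≤ R ^ 2 := sq_le_sq' (abs_le.mp h).1 (abs_le.mp h).2
  simp only [gaussianPDFReal, sub_zero]
  gcongr

lemma mul_gaussianPDFReal_le_gaussianReal_real_Ioc {v : ℝ≥0} (hv : v ≠ 0) {a b R : ℝ}
    (ha : -R ≤ a) (hab : a ≤ b) (hb : b ≤ R) :
    (b - a) * gaussianPDFReal 0 v R ≤ (gaussianReal 0 v).real (Ioc a b) := by
  have hbound := setIntegral_mono_on (μ := volume) (s := Ioc a b)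
    (integrableOn_const (C := gaussianPDFReal 0 v R) (by simp))
    (integrable_gaussianPDFReal 0 v).integrableOn measurableSet_Ioc fun x hx =>
      gaussianPDFReal_zero_le_of_abs_le v
        (abs_le.mpr ⟨by linarith [hx.1], by linarith [hx.2]⟩)
  rw [measureReal_def, gaussianReal_apply_eq_integral _ hv, ENNReal.toReal_ofReal
    (integral_nonneg fun x => gaussianPDFReal_nonneg _ _ _)]
  simpa [hab] using hbound

lemma gaussDensity1_sub_eq (τ x : ℝ) : gaussDensity1 (x - τ) = gaussianPDFReal τ 1 x := by
  simp [gaussDensity1, gaussianPDFReal]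

lemma mixMeasure1_eq {ε : ℝ} (hε : ε ∈ Icc 0 1) (τ : ℝ) :
    mixMeasure1 ε τ = ENNReal.ofReal (1 - ε) • gaussianReal 0 1 +
      ENNReal.ofReal ε • gaussianReal τ 1 := by
  have hε' : 0 ≤ 1 - ε := sub_nonneg.mpr hε.2
  rw [gaussianReal_of_var_ne_zero _ one_ne_zero, gaussianReal_of_var_ne_zero _ one_ne_zero,
    ← withDensity_smul _ (measurable_gaussianPDF _ _),
    ← withDensity_smul _ (measurable_gaussianPDF _ _),
    ← withDensity_add_left ((measurable_gaussianPDF _ _).const_smul _), mixMeasure1]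
  congr 1
  ext z
  have hnonneg := gaussianPDFReal_nonneg
  rw [gaussDensity1_sub_eq, ← sub_zero z, gaussDensity1_sub_eq, sub_zero,
    ENNReal.ofReal_add (mul_nonneg hε' (hnonneg _ _ _)) (mul_nonneg hε.1 (hnonneg _ _ _)),
    ENNReal.ofReal_mul hε', ENNReal.ofReal_mul hε.1]
  rfl

lemma isProbabilityMeasure_mixMeasure1 {ε : ℝ} (hε : ε ∈ Icc 0 1) (τ : ℝ) :
    IsProbabilityMeasure (mixMeasure1 ε τ) := by
  refine ⟨?_⟩
  simp [mixMeasure1_eq hε, ← ENNReal.ofReal_add (sub_nonneg.mpr hε.2) hε.1]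

lemma gaussianReal_real_Ioi_eq_add {τ : ℝ} (hτ : 0 ≤ τ) (t : ℝ) :
    (gaussianReal τ 1).real (Ioi t) =
      (gaussianReal 0 1).real (Ioi t) + (gaussianReal 0 1).real (Ioc (t - τ) t) := by
  have hmap : (gaussianReal 0 1).map (· + τ) = gaussianReal τ 1 := by
    rw [gaussianReal_map_add_const, zero_add]
  have hpreimage : (· + τ) ⁻¹' Ioi t = Ioc (t - τ) t ∪ Ioi t := by
    rw [Ioc_union_Ioi_eq_Ioi (by linarith), preimage_add_const_Ioi]
  rw [← hmap, map_measureReal_apply (by fun_prop) measurableSet_Ioi, hpreimage,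
    measureReal_union (Ioc_disjoint_Ioi le_rfl) measurableSet_Ioi, add_comm]

lemma mixMeasure1_real_Ioi {ε τ : ℝ} (hε : ε ∈ Icc 0 1) (hτ : 0 ≤ τ) (t : ℝ) :
    (mixMeasure1 ε τ).real (Ioi t) =
      (gaussianReal 0 1).real (Ioi t) + ε * (gaussianReal 0 1).real (Ioc (t - τ) t) := by
  rw [mixMeasure1_eq hε, measureReal_add_apply
      (ENNReal.mul_ne_top ENNReal.ofReal_ne_top (measure_ne_top _ _))
      (ENNReal.mul_ne_top ENNReal.ofReal_ne_top (measure_ne_top _ _)),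
    measureReal_ennreal_smul_apply, measureReal_ennreal_smul_apply,
    ENNReal.toReal_ofReal (sub_nonneg.mpr hε.2), ENNReal.toReal_ofReal hε.1,
    gaussianReal_real_Ioi_eq_add hτ]
  ring

lemma add_mul_gaussianPDFReal_le_mixMeasure1_real_Ioi {ε τ t M T : ℝ} (hε : ε ∈ Icc 0 1)
    (hτ : 0 ≤ τ) (hτM : τ ≤ M) (ht : t ∈ Icc 0 T) :
    (gaussianReal 0 1).real (Ioi t) + ε * (τ * gaussianPDFReal 0 1 (T + M)) ≤
      (mixMeasure1 ε τ).real (Ioi t) := by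
  have hshift := mul_gaussianPDFReal_le_gaussianReal_real_Ioc one_ne_zero
    (a := t - τ) (b := t) (R := T + M) (by linarith [ht.1, ht.2]) (by linarith)
    (by linarith [ht.2])
  rw [sub_sub_cancel] at hshift
  rw [mixMeasure1_real_Ioi hε hτ]
  gcongr
  exact hε.1

/-! ### The separation rate -/

lemma log_log_three_pos : 0 < log (log 3) :=
  log_pos ((lt_log_iff_exp_lt three_pos).mpr (exp_one_lt_d9.trans (by norm_num)))

lemma add_add_le_mul_mul {a₀ b₀ a b p : ℝ} (ha₀ : 0 < a₀) (hb₀ : 0 < b₀) (hp : 0 ≤ p)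
    (ha : a₀ ≤ a) (hb : b₀ ≤ b) :
    p + a + b ≤ (p / (a₀ * b₀) + 1 / b₀ + 1 / a₀) * (a * b) := by
  have hp_le : p ≤ p * (a / a₀ * (b / b₀)) := le_mul_of_one_le_right hp <|
    one_le_mul_of_one_le_of_one_le ((one_le_div ha₀).mpr ha) ((one_le_div hb₀).mpr hb)
  have ha_le : a ≤ a * (b / b₀) :=
    le_mul_of_one_le_right (ha₀.le.trans ha) ((one_le_div hb₀).mpr hb)
  have hb_le : b ≤ b * (a / a₀) :=
    le_mul_of_one_le_right (hb₀.le.trans hb) ((one_le_div ha₀).mpr ha)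
  calc p + a + b ≤ p * (a / a₀ * (b / b₀)) + a * (b / b₀) + b * (a / a₀) := by linarith
    _ = (p / (a₀ * b₀) + 1 / b₀ + 1 / a₀) * (a * b) := by
        field_simp

lemma exists_hoeffdingRadius_add_le (β : ℝ) :
    ∃ A : ℝ, ∀ (α : ℝ) (n : ℕ), α ∈ Ioo 0 1 → β ∈ Ioo 0 (1 - α) → 3 ≤ n →
      hoeffdingRadius n (α / #(Kset n)) + hoeffdingRadius n β ≤
        A * √(log (log n) * log (1 / α) / n) := by
  set a₀ := log (log 3)
  set b₀ := log (1 / (1 - β))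
  set p := log 2 + log (1 / β)
  refine ⟨√(p / (a₀ * b₀) + 1 / b₀ + 1 / a₀), fun α n hα hβ hn => ?_⟩
  have hα_pos : 0 < α := hα.1
  have hβ1 : β < 1 := by linarith [hβ.2]
  have hb₀ : 0 < b₀ := log_pos ((one_lt_div (by linarith)).mpr (by linarith [hβ.1]))
  have hp : 0 ≤ p := add_nonneg (log_nonneg one_le_two) (log_nonneg (one_le_one_div hβ.1 hβ1.le))
  have ha : a₀ ≤ log (log n) :=
    log_le_log (log_pos (by norm_num)) (log_le_log three_pos (by exact_mod_cast hn))
  have hb : b₀ ≤ log (1 / α) := log_le_log (one_div_pos.mpr (by linarith))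
    (one_div_le_one_div_of_le hα_pos (by linarith [hβ.2]))
  have hcard_ne : (#(Kset n) : ℝ) ≠ 0 := Nat.cast_ne_zero.mpr (card_Kset_pos n).ne'
  have hlevel : log (1 / (α / #(Kset n))) ≤ log 2 + log (log n) + log (1 / α) := by
    rw [one_div_div, ← mul_one_div, log_mul hcard_ne (one_div_ne_zero hα_pos.ne')]
    linarith [log_card_Kset_le (by omega : 2 ≤ n)]
  refine (hoeffdingRadius_add_le n (Ioo_subset_Ioc_self (div_card_Kset_mem_Ioo n hα))
    ⟨hβ.1, hβ1.le⟩).trans ?_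
  rw [← sqrt_mul' _ (div_nonneg (mul_nonneg (log_log_three_pos.le.trans ha) (hb₀.le.trans hb))
    n.cast_nonneg), ← mul_div_assoc]
  gcongr
  calc log (1 / (α / #(Kset n))) + log (1 / β) ≤ p + log (log n) + log (1 / α) := by linarith
    _ ≤ _ := add_add_le_mul_mul log_log_three_pos hb₀ hp ha hb

theorem unidimensional_test_general (β M : ℝ) :
    ∃ C : ℝ, 0 < C ∧ ∀ (α : ℝ) (n : ℕ), α ∈ Ioo 0 1 → β ∈ Ioo 0 (1 - α) → 3 ≤ n →
      ∀ ε τ : ℝ, ε ∈ Icc 0 1 → 0 < τ → τ ≤ M →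
        C * √(log (log n) * log (1 / α) / n) ≤ ε * τ →
        Measure.pi (fun _ : Fin n => mixMeasure1 ε τ) (rejRegion1d n α)ᶜ ≤
          ENNReal.ofReal β := by
  obtain ⟨A, hA⟩ := exists_hoeffdingRadius_add_le β
  obtain ⟨T, hT⟩ := exists_forall_exists_gaussianReal_real_Ioi_eq 0 one_ne_zero
    (by norm_num : (0 : ℝ) < 1 / 8)
  set c := gaussianPDFReal 0 1 (T + M)
  have hc : 0 < c := gaussianPDFReal_pos 0 1 _ one_ne_zero
  refine ⟨max 1 (max (A / c) (8 * A * M)), by positivity, fun α n hα hβ hn ε τ hε hτ hτM h => ?_⟩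
  have hrad := hA α n hα hβ hn
  set s := √(log (log n) * log (1 / α) / n)
  have hs : 0 ≤ s := sqrt_nonneg _
  have hgap : A * s ≤ ε * (τ * c) := by
    have := (mul_le_mul_of_nonneg_right ((le_max_left _ _).trans (le_max_right _ _)) hs).trans h
    rwa [div_mul_eq_mul_div, div_le_iff₀ hc, mul_assoc] at this
  have hsmall : A * s ≤ 1 / 8 := by
    have := (mul_le_mul_of_nonneg_right ((le_max_right _ _).trans (le_max_right _ _)) hs).trans h
    nlinarith [mul_le_of_le_one_left hτ.le hε.2]
  have hr := hoeffdingRadius_nonneg n (α / #(Kset n))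
  have hr' := hoeffdingRadius_nonneg n β
  obtain ⟨k, hk, hk_ge, hk_le⟩ := exists_mem_Kset_div_mem_Icc (by omega : 2 ≤ n)
  obtain ⟨t, ht, htail⟩ := hT (k / n - hoeffdingRadius n (α / #(Kset n)))
    ⟨by linarith, by linarith⟩
  have hmix := add_mul_gaussianPDFReal_le_mixMeasure1_real_Ioi hε hτ.le hτM ht
  have := isProbabilityMeasure_mixMeasure1 hε τ
  exact measure_pi_compl_rejRegion1d_le (by omega) hk hα ⟨hβ.1, by linarith [hβ.2, hα.1]⟩ _
    ht.1 (by linarith) (by linarith)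

/-- **Lemma (unidimensional order-statistics test).**
Assume `n ≥ 3` and `8.25·ln(2·log₂(n/2)/α)/n ≤ ∫_M^∞ φ(x)dx`. There exists a positive
constant `C(β,M)` depending only on `β, M` such that for every
`ρ ≥ C(β,M)·√(ln ln(n)·ln(1/α)/n)` and every `g = (1-ε)φ + εφ(·-τ) ∈ G₁[M]` with
`ε·τ ≥ ρ`, one has `P_g(T_α = 0) ≤ β`. -/
theorem unidimensional_test (β M : ℝ) (hM : 0 < M) :
    ∃ C : ℝ, 0 < C ∧ ∀ (α : ℝ) (n : ℕ), α ∈ Set.Ioo (0 : ℝ) 1 →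
      β ∈ Set.Ioo (0 : ℝ) (1 - α) → 3 ≤ n →
      8.25 * Real.log (2 * Real.logb 2 ((n : ℝ) / 2) / α) / n ≤
        ∫ x in Set.Ioi M, gaussDensity1 x →
      ∀ ρ : ℝ, C * Real.sqrt (Real.log (Real.log n) * Real.log (1 / α) / n) ≤ ρ →
      ∀ ε τ : ℝ, ε ∈ Set.Ioo (0 : ℝ) 1 → 0 < τ → τ ≤ M → ρ ≤ ε * τ →
        Measure.pi (fun _ : Fin n => mixMeasure1 ε τ) (rejRegion1d n α)ᶜ ≤
          ENNReal.ofReal β := by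
  obtain ⟨C, hC, h⟩ := unidimensional_test_general β M
  exact ⟨C, hC, fun α n hα hβ hn _ ρ hρ ε τ hε hτ hτM hετ =>
    h α n hα hβ hn ε τ (Ioo_subset_Icc_self hε) hτ hτM (hρ.trans hετ)⟩

end
end

section
/- Let d, n ≥ 1, ε ∈ (0,1), r > 0. For ω ∈ {−1,1}^d let g_ω(x) = (1−ε)φ_d(x) + ε·φ_d(x − (r/√d)·ω), and let L_π(X₁,…,Xₙ) = 2^{−d}·Σ_{ω∈{−1,1}^d} ∏_{i=1}^n [ (1−ε) + ε·φ_d(X_i − (r/√d)ω)/φ_d(X_i) ] be the likelihood ratio of the uniform mixture over ω against the standard Gaussian null. Then E₀[L_π(X₁,…,Xₙ)²] = E[ (1 + ε²·(e^{(r²/d)·Y} − 1))^n ], where Y = Σ_{j=1}^d W_j with W₁,…,W_d i.i.d. Rademacher random variables (P(W_j = 1) = P(W_j = −1) = 1/2). -/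
open MeasureTheory Real

noncomputable section

/-- The Rademacher distribution on `ℝ`: `P({1}) = P({-1}) = 1/2`. -/
def radem : Measure ℝ :=
  (2 : ENNReal)⁻¹ • Measure.dirac (1 : ℝ) + (2 : ENNReal)⁻¹ • Measure.dirac (-1 : ℝ)

/-- The sign vector of `ℝ^d` associated to `ω ∈ {-1,1}^d` (coded by booleans). -/
def sgnVec {d : ℕ} (ω : Fin d → Bool) : EuclideanSpace ℝ (Fin d) :=
  (WithLp.equiv 2 (Fin d → ℝ)).symm fun j => if ω j then 1 else -1

/-- The likelihood ratio `L_π` of the uniform mixture of the alternatives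
`g_ω = (1-ε)φ_d + ε·φ_d(· - (r/√d)ω)`, `ω ∈ {-1,1}^d`, against the standard Gaussian
null, evaluated at the sample `X = (X₁,…,Xₙ)`. -/
def likRatioRadem (d n : ℕ) (ε r : ℝ) (X : Fin n → EuclideanSpace ℝ (Fin d)) : ℝ :=
  ((2 : ℝ) ^ d)⁻¹ * ∑ ω : Fin d → Bool, ∏ i,
    ((1 - ε) + ε * gaussDensity d (X i - (r / Real.sqrt d) • sgnVec ω) / gaussDensity d (X i))

/-!
The ratios `h_v(x) = φ_d(x - v) / φ_d(x)` multiply as `h_u h_v = e^⟨u, v⟩ h_{u + v}`, and each `h_v`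
has `φ_d`-mean `1` by translation invariance of Lebesgue measure, so `E₀[h_u h_v] = e^⟨u, v⟩`.
Contamination turns this into `1 + ε² (e^⟨u, v⟩ - 1)`. Squaring a mixture over a finite prior and
integrating coordinate by coordinate therefore gives the average of `(1 + ε² (e^⟨θ, θ'⟩ - 1))ⁿ` over
two independent draws `θ, θ'` from the prior. For the uniform prior on sign vectors, multiplying the
second draw coordinatewise by the first preserves its law and replaces `⟨ω, ω'⟩` by the sum of its
coordinates.
-/

/-- The likelihood ratio of the contamination `(1 - ε) • μ + ε • ν` against `μ`, where `h` is the
likelihood ratio of `ν` against `μ`. -/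
def contaminatedRatio {α : Type*} (ε : ℝ) (h : α → ℝ) (x : α) : ℝ :=
  (1 - ε) + ε * h x

section ContaminatedRatio

variable {α : Type*} {h k : α → ℝ}

theorem contaminatedRatio_mul (ε δ : ℝ) (x : α) :
    contaminatedRatio ε h x * contaminatedRatio δ k x =
      (1 - ε) * (1 - δ) + ε * (1 - δ) * h x + (1 - ε) * δ * k x + ε * δ * (h x * k x) := by
  unfold contaminatedRatio
  ring

variable [MeasurableSpace α] {μ : Measure α}

theorem integrable_contaminatedRatio_mul [IsFiniteMeasure μ] (ε δ : ℝ) (hh : Integrable h μ)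
    (hk : Integrable k μ) (hhk : Integrable (fun x => h x * k x) μ) :
    Integrable (fun x => contaminatedRatio ε h x * contaminatedRatio δ k x) μ := by
  simp_rw [contaminatedRatio_mul]
  fun_prop

theorem integral_contaminatedRatio_mul [IsProbabilityMeasure μ] (ε δ : ℝ)
    (hh : Integrable h μ) (hk : Integrable k μ) (hhk : Integrable (fun x => h x * k x) μ)
    (hh_one : ∫ x, h x ∂μ = 1) (hk_one : ∫ x, k x ∂μ = 1) :
    ∫ x, contaminatedRatio ε h x * contaminatedRatio δ k x ∂μ =
      1 + ε * δ * (∫ x, h x * k x ∂μ - 1) := by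
  simp_rw [contaminatedRatio_mul]
  rw [integral_add (by fun_prop) (by fun_prop), integral_add (by fun_prop) (by fun_prop),
    integral_add (by fun_prop) (by fun_prop)]
  simp only [integral_const_mul, integral_const, probReal_univ, one_smul, hh_one, hk_one]
  ring

end ContaminatedRatio

theorem integral_sq_sum_mul_prod {𝕜 ι κ : Type*} [RCLike 𝕜] [Fintype ι] [Fintype κ]
    {α : ι → Type*} [∀ i, MeasurableSpace (α i)] {μ : ∀ i, Measure (α i)} [∀ i, SigmaFinite (μ i)]
    (p : κ → 𝕜) {f : κ → ∀ i, α i → 𝕜}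
    (hf : ∀ k l i, Integrable (fun x => f k i x * f l i x) (μ i)) :
    ∫ X, (∑ k, p k * ∏ i, f k i (X i)) ^ 2 ∂Measure.pi μ =
      ∑ k, ∑ l, p k * p l * ∏ i, ∫ x, f k i x * f l i x ∂μ i := by
  have sq_sum (X : ∀ i, α i) : (∑ k, p k * ∏ i, f k i (X i)) ^ 2 =
      ∑ k, ∑ l, p k * p l * ∏ i, (f k i (X i) * f l i (X i)) := by
    simp_rw [sq, Finset.sum_mul_sum, mul_mul_mul_comm, Finset.prod_mul_distrib]
  have hint (k l : κ) : Integrable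
      (fun X : ∀ i, α i => p k * p l * ∏ i, (f k i (X i) * f l i (X i))) (Measure.pi μ) :=
    (Integrable.fintype_prod_dep (hf k l)).const_mul _
  simp_rw [sq_sum]
  rw [integral_finsetSum _ fun k _ => integrable_finsetSum _ fun l _ => hint k l]
  refine Finset.sum_congr rfl fun k _ => ?_
  rw [integral_finsetSum _ fun l _ => hint k l]
  refine Finset.sum_congr rfl fun l _ => ?_
  rw [integral_const_mul, integral_fintype_prod_eq_prod fun i x => f k i x * f l i x]

section Gaussian

variable {d : ℕ}

theorem gaussDensity_pos (x : EuclideanSpace ℝ (Fin d)) : 0 < gaussDensity d x := by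
  unfold gaussDensity
  positivity

theorem continuous_gaussDensity : Continuous (gaussDensity d) := by
  unfold gaussDensity
  fun_prop

theorem integral_gaussDensity : ∫ x, gaussDensity d x = 1 := by
  have hexp (x : EuclideanSpace ℝ (Fin d)) : -‖x‖ ^ 2 / 2 = -(1 / 2) * ‖x‖ ^ 2 := by ring
  simp_rw [gaussDensity, hexp]
  rw [integral_const_mul, GaussianFourier.integral_rexp_neg_mul_sq_norm (by norm_num),
    finrank_euclideanSpace_fin, div_div_eq_mul_div, div_one, mul_comm π, neg_div,
    ← Real.rpow_add (by positivity), neg_add_cancel, Real.rpow_zero]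

theorem integrable_gaussDensity : Integrable (gaussDensity d) :=
  .of_integral_ne_zero (by simp [integral_gaussDensity])

section WithDensity

variable {E : Type*} [NormedAddCommGroup E] [NormedSpace ℝ E] (f : EuclideanSpace ℝ (Fin d) → E)

theorem integral_gaussMeasure : ∫ x, f x ∂gaussMeasure d = ∫ x, gaussDensity d x • f x := by
  rw [gaussMeasure, integral_withDensity_eq_integral_toReal_smul
    continuous_gaussDensity.measurable.ennreal_ofReal (by simp)]
  simp_rw [ENNReal.toReal_ofReal (gaussDensity_pos _).le]

theorem integrable_gaussMeasure_iff :
    Integrable f (gaussMeasure d) ↔ Integrable fun x => gaussDensity d x • f x := by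
  rw [gaussMeasure, integrable_withDensity_iff_integrable_smul'
    continuous_gaussDensity.measurable.ennreal_ofReal (by simp)]
  simp_rw [ENNReal.toReal_ofReal (gaussDensity_pos _).le]

end WithDensity

instance isProbabilityMeasure_gaussMeasure : IsProbabilityMeasure (gaussMeasure d) := by
  have h : ∫ _, (1 : ℝ) ∂gaussMeasure d = 1 := by
    simp_rw [integral_gaussMeasure, smul_eq_mul, mul_one, integral_gaussDensity]
  rw [integral_const, smul_eq_mul, mul_one] at h
  exact ⟨(ENNReal.toReal_eq_one_iff _).1 h⟩

/-- The likelihood ratio `φ_d(x - v) / φ_d(x)` of the Gaussian with mean `v` against the standard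
Gaussian. -/
def gaussLikRatio (v x : EuclideanSpace ℝ (Fin d)) : ℝ :=
  gaussDensity d (x - v) / gaussDensity d x

theorem gaussDensity_mul_gaussLikRatio (v x : EuclideanSpace ℝ (Fin d)) :
    gaussDensity d x * gaussLikRatio v x = gaussDensity d (x - v) :=
  mul_div_cancel₀ _ (gaussDensity_pos x).ne'

theorem gaussLikRatio_eq_exp (v x : EuclideanSpace ℝ (Fin d)) :
    gaussLikRatio v x = Real.exp (inner ℝ v x - ‖v‖ ^ 2 / 2) := by
  rw [gaussLikRatio, gaussDensity, gaussDensity, mul_div_mul_left _ _ (by positivity),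
    ← Real.exp_sub, norm_sub_sq_real, real_inner_comm]
  ring_nf

theorem gaussLikRatio_mul (u v x : EuclideanSpace ℝ (Fin d)) :
    gaussLikRatio u x * gaussLikRatio v x = Real.exp (inner ℝ u v) * gaussLikRatio (u + v) x := by
  simp_rw [gaussLikRatio_eq_exp, ← Real.exp_add, inner_add_left, norm_add_sq_real]
  ring_nf

theorem integrable_gaussLikRatio (v : EuclideanSpace ℝ (Fin d)) :
    Integrable (gaussLikRatio v) (gaussMeasure d) := by
  simp_rw [integrable_gaussMeasure_iff, smul_eq_mul, gaussDensity_mul_gaussLikRatio]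
  exact integrable_gaussDensity.comp_sub_right v

theorem integral_gaussLikRatio (v : EuclideanSpace ℝ (Fin d)) :
    ∫ x, gaussLikRatio v x ∂gaussMeasure d = 1 := by
  simp_rw [integral_gaussMeasure, smul_eq_mul, gaussDensity_mul_gaussLikRatio]
  rw [integral_sub_right_eq_self (gaussDensity d), integral_gaussDensity]

theorem integrable_gaussLikRatio_mul (u v : EuclideanSpace ℝ (Fin d)) :
    Integrable (fun x => gaussLikRatio u x * gaussLikRatio v x) (gaussMeasure d) := by
  simp_rw [gaussLikRatio_mul]
  exact (integrable_gaussLikRatio _).const_mul _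

theorem integral_gaussLikRatio_mul (u v : EuclideanSpace ℝ (Fin d)) :
    ∫ x, gaussLikRatio u x * gaussLikRatio v x ∂gaussMeasure d = Real.exp (inner ℝ u v) := by
  simp_rw [gaussLikRatio_mul, integral_const_mul, integral_gaussLikRatio, mul_one]

theorem integral_sq_mixture_contaminatedRatio {ι κ : Type*} [Fintype ι] [Fintype κ] (ε : ℝ)
    (p : κ → ℝ) (θ : κ → EuclideanSpace ℝ (Fin d)) :
    ∫ X, (∑ k, p k * ∏ i, contaminatedRatio ε (gaussLikRatio (θ k)) (X i)) ^ 2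
        ∂(Measure.pi fun _ : ι => gaussMeasure d) =
      ∑ k, ∑ l, p k * p l *
        (1 + ε ^ 2 * (Real.exp (inner ℝ (θ k) (θ l)) - 1)) ^ Fintype.card ι := by
  rw [integral_sq_sum_mul_prod p fun k l _ => integrable_contaminatedRatio_mul ε ε
    (integrable_gaussLikRatio (θ k)) (integrable_gaussLikRatio (θ l))
    (integrable_gaussLikRatio_mul _ _)]
  simp_rw [integral_contaminatedRatio_mul ε ε (integrable_gaussLikRatio _)
    (integrable_gaussLikRatio _) (integrable_gaussLikRatio_mul _ _)
    (integral_gaussLikRatio _) (integral_gaussLikRatio _),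
    integral_gaussLikRatio_mul, Finset.prod_const, Finset.card_univ, ← sq]

end Gaussian

/-- The encoding of `{-1, 1}` by booleans used in `sgnVec`, under which multiplication of signs is
the boolean operation `==`. -/
def boolSign (b : Bool) : ℝ :=
  if b then 1 else -1

theorem boolSign_beq (a b : Bool) : boolSign (a == b) = boolSign a * boolSign b := by
  cases a <;> cases b <;> simp [boolSign]

theorem injective_boolSign : Function.Injective boolSign := by
  intro a b
  cases a <;> cases b <;> norm_num [boolSign]

theorem radem_eq_map_boolSign :
    radem = ((2 : ENNReal)⁻¹ • Measure.count : Measure Bool).map boolSign := by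
  have hs : Measurable boolSign := measurable_of_finite _
  rw [Measure.map_smul, Measure.count, Measure.sum_fintype, Fintype.sum_bool,
    Measure.map_add _ _ hs, Measure.map_dirac' hs, Measure.map_dirac' hs, smul_add]
  simp [radem, boolSign]

theorem integral_pi_radem {ι E : Type*} [Fintype ι] [DecidableEq ι] [NormedAddCommGroup E]
    [NormedSpace ℝ E] [CompleteSpace E] (f : (ι → ℝ) → E) :
    ∫ w, f w ∂(Measure.pi fun _ : ι => radem) =
      ((2 : ℝ) ^ Fintype.card ι)⁻¹ • ∑ ω : ι → Bool, f fun j => boolSign (ω j) := by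
  have : IsFiniteMeasure ((2 : ENNReal)⁻¹ • Measure.count : Measure Bool) :=
    Measure.smul_finite _ (by simp)
  have hs : Measurable boolSign := measurable_of_finite _
  have hemb : MeasurableEmbedding fun (ω : ι → Bool) j => boolSign (ω j) :=
    (measurable_of_finite _).measurableEmbedding injective_boolSign.comp_left
  rw [radem_eq_map_boolSign, ← Measure.pi_map_pi fun _ => hs.aemeasurable, hemb.integral_map,
    integral_fintype .of_finite, Finset.smul_sum]
  simp [measureReal_def, Measure.pi_singleton]

theorem sum_comp_beq_left {ι M : Type*} [Fintype ι] [DecidableEq ι] [AddCommMonoid M] (ω : ι → Bool)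
    (g : (ι → Bool) → M) :
    ∑ ω' : ι → Bool, g (fun j => ω j == ω' j) = ∑ ω', g ω' := by
  have hinv : Function.Involutive fun (ω' : ι → Bool) j => ω j == ω' j :=
    fun ω' => funext fun j => by cases hj : ω j <;> simp [hj]
  exact hinv.bijective.sum_comp g

theorem sgnVec_apply {d : ℕ} (ω : Fin d → Bool) (j : Fin d) : sgnVec ω j = boolSign (ω j) :=
  rfl

theorem inner_sgnVec {d : ℕ} (ω ω' : Fin d → Bool) :
    inner ℝ (sgnVec ω) (sgnVec ω') = ∑ j, boolSign (ω j == ω' j) := by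
  simp_rw [PiLp.inner_apply, sgnVec_apply, boolSign_beq]
  simp [mul_comm]

theorem sum_sum_comp_inner_sgnVec {d : ℕ} {M : Type*} [AddCommMonoid M] (g : ℝ → M) :
    ∑ ω : Fin d → Bool, ∑ ω' : Fin d → Bool, g (inner ℝ (sgnVec ω) (sgnVec ω')) =
      2 ^ d • ∑ ω : Fin d → Bool, g (∑ j, boolSign (ω j)) := by
  have hshift (ω : Fin d → Bool) := sum_comp_beq_left ω fun ω' => g (∑ j, boolSign (ω' j))
  simp_rw [inner_sgnVec, hshift]
  simp

theorem likRatioRadem_eq_sum_contaminatedRatio (d n : ℕ) (ε r : ℝ)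
    (X : Fin n → EuclideanSpace ℝ (Fin d)) :
    likRatioRadem d n ε r X = ∑ ω : Fin d → Bool, ((2 : ℝ) ^ d)⁻¹ *
      ∏ i, contaminatedRatio ε (gaussLikRatio ((r / √d) • sgnVec ω)) (X i) := by
  simp_rw [likRatioRadem, contaminatedRatio, gaussLikRatio, mul_div_assoc, Finset.mul_sum]

theorem likRatio_secondMoment_radem_general (d n : ℕ) (ε r : ℝ) :
    ∫ X : Fin n → EuclideanSpace ℝ (Fin d), (likRatioRadem d n ε r X) ^ 2
        ∂(Measure.pi fun _ : Fin n => gaussMeasure d) =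
      ∫ w : Fin d → ℝ, (1 + ε ^ 2 * (Real.exp (r ^ 2 / d * ∑ j, w j) - 1)) ^ n
        ∂(Measure.pi fun _ : Fin d => radem) := by
  let g (y : ℝ) : ℝ := (1 + ε ^ 2 * (Real.exp (r ^ 2 / d * y) - 1)) ^ n
  have hinner (ω ω' : Fin d → Bool) : inner ℝ ((r / √d) • sgnVec ω) ((r / √d) • sgnVec ω') =
      r ^ 2 / d * inner ℝ (sgnVec ω) (sgnVec ω') := by
    rw [real_inner_smul_left, real_inner_smul_right, ← mul_assoc, div_mul_div_comm,
      Real.mul_self_sqrt d.cast_nonneg, ← sq]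
  calc
    _ = ∑ ω, ∑ ω', ((2 : ℝ) ^ d)⁻¹ * ((2 : ℝ) ^ d)⁻¹ * g (inner ℝ (sgnVec ω) (sgnVec ω')) := by
      simp_rw [likRatioRadem_eq_sum_contaminatedRatio, integral_sq_mixture_contaminatedRatio,
        hinner, Fintype.card_fin]
      rfl
    _ = ((2 : ℝ) ^ d)⁻¹ * ∑ ω : Fin d → Bool, g (∑ j, boolSign (ω j)) := by
      simp_rw [← Finset.mul_sum, sum_sum_comp_inner_sgnVec, nsmul_eq_mul]
      push_cast
      field_simp
    _ = _ := by
      rw [integral_pi_radem, Fintype.card_fin, smul_eq_mul]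

/-- **Second moment of the likelihood ratio (Rademacher prior, `l₂` lower bound).**
`E₀[L_π²] = E[(1 + ε²(e^{(r²/d)Y} - 1))ⁿ]` where `Y = Σⱼ Wⱼ` is a sum of `d` i.i.d.
Rademacher random variables. -/
theorem likRatio_secondMoment_radem (d n : ℕ) (hd : 1 ≤ d) (hn : 1 ≤ n)
    (ε r : ℝ) (hε : ε ∈ Set.Ioo (0 : ℝ) 1) (hr : 0 < r) :
    ∫ X : Fin n → EuclideanSpace ℝ (Fin d), (likRatioRadem d n ε r X) ^ 2
        ∂(Measure.pi fun _ : Fin n => gaussMeasure d) =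
      ∫ w : Fin d → ℝ, (1 + ε ^ 2 * (Real.exp (r ^ 2 / d * ∑ j, w j) - 1)) ^ n
        ∂(Measure.pi fun _ : Fin d => radem) := by
  exact likRatio_secondMoment_radem_general d n ε r

end
end

section
/- Let d, n ≥ 1, M > 0, 0 < r ≤ M, ε ∈ (0,1), and set C(M) = 1 + (M²/2)·e^{M²} and a = C(M)·ε²·r²/√d. Let Y = Σ_{j=1}^d W_j with W₁,…,W_d i.i.d. Rademacher random variables. If n·a ≤ 1/4, then E[ (1 + ε²·(e^{(r²/d)·Y} − 1))^n ] ≤ h(1/4) ≤ 3, where h(x) = e^x·(1 + 4x·e^{−1/2}/(1 − 2x)) for x ∈ [0, 1/2), a function which is nondecreasing on [0, 1/2). -/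
open MeasureTheory Real

noncomputable section

/-- The function `h(x) = e^x·(1 + 4x·e^{-1/2}/(1-2x))`. -/
def hFun (x : ℝ) : ℝ := Real.exp x * (1 + 4 * x / (1 - 2 * x) * Real.exp (-(1 / 2)))

/-!
Put `z = Y / √d`. The second-order Taylor bound for `exp` gives
`exp (r² / d * Y) - 1 ≤ C(M) * (r² / √d) * (1 + z²)`, so `1 + δ ≤ exp δ` bounds the integrand by
`exp (x * (1 + z²))` for every `x ≥ n * a`. As `z` is sub-Gaussian with parameter `1`,
`E[exp (x * z²)] ≤ (1 - 2 * x) ^ (-1 / 2)` for `x < 1 / 2`. This replaces the integration of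
Hoeffding's tail bound that produces the second factor of `h`, and is at most that factor.
-/

open ProbabilityTheory
open scoped NNReal

lemma lintegral_exp_mul_gaussianReal (v : ℝ≥0) (z : ℝ) :
    ∫⁻ x, ENNReal.ofReal (exp (z * x)) ∂gaussianReal 0 v =
      ENNReal.ofReal (exp (v * z ^ 2 / 2)) := by
  rw [← ofReal_integral_eq_lintegral_ofReal (integrable_exp_mul_gaussianReal z)
    (.of_forall fun _ => (exp_pos _).le)]
  congr 1
  simpa [mgf] using congrFun (mgf_id_gaussianReal (μ := 0) (v := v)) z

lemma lintegral_exp_mul_sq_gaussianReal {v : ℝ≥0} {t : ℝ} (htv : 2 * t * v < 1) :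
    ∫⁻ x, ENNReal.ofReal (exp (t * x ^ 2)) ∂gaussianReal 0 v =
      ENNReal.ofReal (√(1 - 2 * t * v))⁻¹ := by
  obtain rfl | hv := eq_or_ne v 0
  · simp
  have hrate : 0 < (1 - 2 * t * v) / (2 * v) := div_pos (by linarith) (by positivity)
  have hdensity (x : ℝ) : gaussianPDF 0 v x * ENNReal.ofReal (exp (t * x ^ 2)) =
      ENNReal.ofReal (√(2 * π * v))⁻¹ *
        ENNReal.ofReal (exp (-((1 - 2 * t * v) / (2 * v)) * x ^ 2)) := by
    rw [gaussianPDF, gaussianPDFReal, ← ENNReal.ofReal_mul (by positivity),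
      ← ENNReal.ofReal_mul (by positivity), mul_assoc, ← exp_add]
    congr 3
    field_simp
    ring
  rw [gaussianReal_of_var_ne_zero 0 hv,
    lintegral_withDensity_eq_lintegral_mul _ (measurable_gaussianPDF 0 v) (by fun_prop)]
  simp only [Pi.mul_apply, hdensity]
  rw [lintegral_const_mul _ (by fun_prop),
    ← ofReal_integral_eq_lintegral_ofReal (integrable_exp_neg_mul_sq hrate)
      (.of_forall fun _ => (exp_pos _).le),
    integral_gaussian, ← ENNReal.ofReal_mul (by positivity), ← sqrt_inv, ← sqrt_inv,
    ← sqrt_mul (by positivity)]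
  congr 2
  field_simp

section SubGaussian

variable {Ω : Type*} {mΩ : MeasurableSpace Ω} {μ : Measure Ω} {X : Ω → ℝ} {c : ℝ≥0} {t : ℝ}

lemma lintegral_exp_mul_sq_le_of_hasSubgaussianMGF (hX : HasSubgaussianMGF X c μ) (ht : 0 ≤ t)
    (hct : 2 * c * t < 1) :
    ∫⁻ ω, ENNReal.ofReal (exp (t * X ω ^ 2)) ∂μ ≤ ENNReal.ofReal (√(1 - 2 * c * t))⁻¹ := by
  lift t to ℝ≥0 using ht
  have : IsFiniteMeasure μ :=
    (integrable_const_iff_isFiniteMeasure one_ne_zero).1 (by simpa using hX.integrable_exp_mul 0)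
  have hmeas : AEMeasurable X μ := hX.aemeasurable
  have hvar : 2 * (c / 2 : ℝ) * (2 * t : ℝ≥0) = 2 * c * t := by
    push_cast
    ring
  -- Gaussian linearization: `exp (t * X²)` is the moment generating function of `N(0, 2t)` at `X`,
  -- so after exchanging the integrals only the moment generating function of `X` is left.
  calc ∫⁻ ω, ENNReal.ofReal (exp (t * X ω ^ 2)) ∂μ
      = ∫⁻ ω, ∫⁻ g, ENNReal.ofReal (exp (X ω * g)) ∂gaussianReal 0 (2 * t) ∂μ := by
        simp_rw [lintegral_exp_mul_gaussianReal]
        push_cast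
        ring_nf
    _ = ∫⁻ g, ∫⁻ ω, ENNReal.ofReal (exp (g * X ω)) ∂μ ∂gaussianReal 0 (2 * t) := by
        simp_rw [mul_comm (X _)]
        exact lintegral_lintegral_swap (by fun_prop)
    _ ≤ ∫⁻ g, ENNReal.ofReal (exp (c / 2 * g ^ 2)) ∂gaussianReal 0 (2 * t) := by
        refine lintegral_mono fun g => ?_
        rw [← ofReal_integral_eq_lintegral_ofReal (hX.integrable_exp_mul g)
          (.of_forall fun _ => (exp_pos _).le), div_mul_eq_mul_div]
        exact ENNReal.ofReal_le_ofReal (hX.mgf_le g)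
    _ = ENNReal.ofReal (√(1 - 2 * c * t))⁻¹ := by
        rw [lintegral_exp_mul_sq_gaussianReal (hvar.trans_lt hct), hvar]

lemma integrable_exp_mul_sq_of_hasSubgaussianMGF (hX : HasSubgaussianMGF X c μ) (ht : 0 ≤ t)
    (hct : 2 * c * t < 1) : Integrable (fun ω => exp (t * X ω ^ 2)) μ := by
  have hmeas : AEMeasurable X μ := hX.aemeasurable
  refine (lintegral_ofReal_ne_top_iff_integrable
    (AEMeasurable.aestronglyMeasurable (by fun_prop)) (.of_forall fun _ => (exp_pos _).le)).1 ?_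
  exact ((lintegral_exp_mul_sq_le_of_hasSubgaussianMGF hX ht hct).trans_lt ENNReal.ofReal_lt_top).ne

lemma integral_exp_mul_sq_le_of_hasSubgaussianMGF (hX : HasSubgaussianMGF X c μ) (ht : 0 ≤ t)
    (hct : 2 * c * t < 1) : ∫ ω, exp (t * X ω ^ 2) ∂μ ≤ (√(1 - 2 * c * t))⁻¹ := by
  rw [← ENNReal.ofReal_le_ofReal_iff (by positivity), ofReal_integral_eq_lintegral_ofReal
    (integrable_exp_mul_sq_of_hasSubgaussianMGF hX ht hct) (.of_forall fun _ => (exp_pos _).le)]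
  exact lintegral_exp_mul_sq_le_of_hasSubgaussianMGF hX ht hct

end SubGaussian

lemma abs_exp_sub_one_sub_self_le {u B : ℝ} (hu : |u| ≤ B) :
    |exp u - 1 - u| ≤ exp B / 2 * u ^ 2 := by
  obtain rfl | hu0 := eq_or_ne u 0
  · simp
  obtain ⟨ξ, hξ, htaylor⟩ := taylor_mean_remainder_lagrange_iteratedDeriv (n := 1) hu0.symm
    contDiff_exp.contDiffOn
  have hderiv : derivWithin exp (Set.uIcc 0 u) 0 = 1 := by
    rw [differentiableAt_exp.derivWithin (uniqueDiffOn_uIcc hu0.symm 0 Set.left_mem_uIcc)]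
    simp
  have hpoly : taylorWithinEval exp 1 (Set.uIcc 0 u) 0 u = 1 + u := by
    simp [taylorWithinEval_succ, hderiv]
  rw [hpoly, iteratedDeriv_eq_iterate, iter_deriv_exp, one_add_one_eq_two, Nat.factorial_two,
    Nat.cast_two, sub_zero] at htaylor
  have hremainder : exp u - 1 - u = exp ξ / 2 * u ^ 2 := by linear_combination htaylor
  have hξB : ξ ≤ B :=
    hξ.2.le.trans (max_le ((abs_nonneg u).trans hu) ((le_abs_self u).trans hu))
  rw [hremainder, abs_of_nonneg (by positivity)]
  gcongr

lemma exp_mul_sub_one_le {b z B : ℝ} (hb : 0 ≤ b) (hbB : b ≤ B) (hbz : |b * z| ≤ B) :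
    exp (b * z) - 1 ≤ (1 + B / 2 * exp B) * b * (1 + z ^ 2) := by
  have htaylor : exp (b * z) - 1 - b * z ≤ exp B / 2 * (b * z) ^ 2 :=
    (le_abs_self _).trans (abs_exp_sub_one_sub_self_le hbz)
  have hlinear : b * z ≤ b * (1 + z ^ 2) := by
    gcongr
    nlinarith [sq_nonneg (z - 1), sq_nonneg z]
  have hB : 0 ≤ B := hb.trans hbB
  have hquadratic : exp B / 2 * (b * z) ^ 2 ≤ B / 2 * exp B * b * (1 + z ^ 2) :=
    calc exp B / 2 * (b * z) ^ 2 = exp B / 2 * b * (b * z ^ 2) := by ring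
      _ ≤ exp B / 2 * b * (B * (1 + z ^ 2)) := by
        gcongr
        linarith
      _ = B / 2 * exp B * b * (1 + z ^ 2) := by ring
  linarith

lemma one_add_mul_exp_sub_one_nonneg {δ : ℝ} (hδ0 : 0 ≤ δ) (hδ1 : δ ≤ 1) (u : ℝ) :
    0 ≤ 1 + δ * (exp u - 1) := by
  linarith [mul_nonneg hδ0 (exp_pos u).le]

lemma one_add_mul_exp_sub_one_pow_le {δ : ℝ} (hδ0 : 0 ≤ δ) (hδ1 : δ ≤ 1) (u : ℝ) (n : ℕ) :
    (1 + δ * (exp u - 1)) ^ n ≤ exp (n * (δ * (exp u - 1))) := by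
  rw [exp_nat_mul]
  gcongr
  · exact one_add_mul_exp_sub_one_nonneg hδ0 hδ1 u
  · linarith [add_one_le_exp (δ * (exp u - 1))]

lemma one_add_sq_mul_exp_sub_one_pow_le {d M r ε x y : ℝ} {n : ℕ} (hd : 1 ≤ d) (hy : |y| ≤ d)
    (hrM : |r| ≤ M) (hε : |ε| ≤ 1)
    (hx : n * ((1 + M ^ 2 / 2 * exp (M ^ 2)) * ε ^ 2 * r ^ 2 / √d) ≤ x) :
    (1 + ε ^ 2 * (exp (r ^ 2 / d * y) - 1)) ^ n ≤ exp x * exp (x / d * y ^ 2) := by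
  have hd0 : 0 < d := by linarith
  have hsq : √d ^ 2 = d := sq_sqrt hd0.le
  have hr2 : r ^ 2 ≤ M ^ 2 := sq_le_sq' (abs_le.1 hrM).1 (abs_le.1 hrM).2
  have hscale : r ^ 2 / d * y = r ^ 2 / √d * (y / √d) := by
    rw [div_mul_div_comm, ← sq, hsq, mul_div_right_comm]
  have hle : r ^ 2 / √d ≤ M ^ 2 := (div_le_self (sq_nonneg r) (one_le_sqrt.2 hd)).trans hr2
  have habs : |r ^ 2 / √d * (y / √d)| ≤ M ^ 2 :=
    calc |r ^ 2 / √d * (y / √d)| = r ^ 2 / d * |y| := by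
          rw [← hscale, abs_mul, abs_of_nonneg (by positivity)]
      _ ≤ r ^ 2 / d * d := by gcongr
      _ ≤ M ^ 2 := by rwa [div_mul_cancel₀ _ hd0.ne']
  calc (1 + ε ^ 2 * (exp (r ^ 2 / d * y) - 1)) ^ n
      ≤ exp (n * (ε ^ 2 * (exp (r ^ 2 / √d * (y / √d)) - 1))) := by
        rw [hscale]
        exact one_add_mul_exp_sub_one_pow_le (sq_nonneg ε) ((sq_le_one_iff_abs_le_one ε).2 hε) _ n
    _ ≤ exp (n * (ε ^ 2 * ((1 + M ^ 2 / 2 * exp (M ^ 2)) * (r ^ 2 / √d) *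
          (1 + (y / √d) ^ 2)))) := by
        gcongr
        exact exp_mul_sub_one_le (by positivity) hle habs
    _ = exp (n * ((1 + M ^ 2 / 2 * exp (M ^ 2)) * ε ^ 2 * r ^ 2 / √d) * (1 + (y / √d) ^ 2)) := by
        ring_nf
    _ ≤ exp (x * (1 + (y / √d) ^ 2)) := by gcongr
    _ = exp x * exp (x / d * y ^ 2) := by
        rw [← exp_add, div_pow, hsq]
        ring_nf

lemma exp_mul_inv_sqrt_le_hFun {x : ℝ} (hx0 : 0 ≤ x) (hx : x < 1 / 2) :
    exp x * (√(1 - 2 * x))⁻¹ ≤ hFun x := by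
  have hpos : 0 < 1 - 2 * x := by linarith
  have hexp : 1 / 2 ≤ exp (-(1 / 2)) := by linarith [add_one_le_exp (-(1 / 2) : ℝ)]
  have hsqrt : 1 - 2 * x ≤ √(1 - 2 * x) := le_sqrt_of_sq_le (by nlinarith)
  rw [hFun]
  gcongr
  calc (√(1 - 2 * x))⁻¹ ≤ (1 - 2 * x)⁻¹ := by gcongr
    _ = 1 + 4 * x / (1 - 2 * x) * (1 / 2) := by
        field_simp
        ring
    _ ≤ 1 + 4 * x / (1 - 2 * x) * exp (-(1 / 2)) := by gcongr

lemma hFun_one_quarter_le_three : hFun (1 / 4) ≤ 3 := by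
  have hlower : 1 ≤ exp (1 / 4) := one_le_exp (by norm_num)
  have hupper : exp (1 / 4) ≤ 2 := by
    rw [← le_log_iff_exp_le two_pos]
    linarith [log_two_gt_d9]
  have hsq : exp (-(1 / 2)) = (exp (1 / 4))⁻¹ ^ 2 := by
    rw [← exp_neg, ← exp_nat_mul]
    norm_num
  have hquotient : hFun (1 / 4) = (exp (1 / 4) ^ 2 + 2) / exp (1 / 4) := by
    rw [hFun, hsq]
    field_simp
    ring
  rw [hquotient, div_le_iff₀ (exp_pos _)]
  nlinarith [mul_nonneg (sub_nonneg.2 hlower) (sub_nonneg.2 hupper)]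

lemma monotoneOn_hFun : MonotoneOn hFun (Set.Ico (0 : ℝ) (1 / 2)) := by
  rintro x ⟨hx0, -⟩ y ⟨-, hy⟩ hxy
  have hx1 : 0 < 1 - 2 * x := by linarith
  have hy0 : 0 ≤ y := hx0.trans hxy
  have hy1 : 0 < 1 - 2 * y := by linarith
  unfold hFun
  gcongr

instance : IsProbabilityMeasure radem :=
  ⟨by simp [radem, ENNReal.inv_two_add_inv_two]⟩

lemma ae_radem_iff {p : ℝ → Prop} : (∀ᵐ x ∂radem, p x) ↔ p 1 ∧ p (-1) := by
  simp [radem, ae_add_measure_iff, ae_dirac_eq]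

lemma integral_radem (f : ℝ → ℝ) : ∫ x, f x ∂radem = (f 1 + f (-1)) / 2 := by
  have hint (a : ℝ) : Integrable f ((2 : ENNReal)⁻¹ • Measure.dirac a) :=
    (integrable_dirac (by simp)).smul_measure (by simp)
  rw [radem, integral_add_measure (hint 1) (hint (-1)), integral_smul_measure,
    integral_smul_measure, integral_dirac, integral_dirac]
  simp only [ENNReal.toReal_inv, ENNReal.toReal_ofNat, smul_eq_mul]
  ring

lemma hasSubgaussianMGF_id_radem : HasSubgaussianMGF id 1 radem := by
  have hmem : ∀ᵐ x ∂radem, id x ∈ Set.Icc (-1 : ℝ) 1 := ae_radem_iff.2 (by norm_num)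
  have hmean : ∫ x, id x ∂radem = 0 := by simp [integral_radem]
  convert hasSubgaussianMGF_of_mem_Icc_of_integral_eq_zero aemeasurable_id hmem hmean
  ext
  norm_num

section Pi

variable (ι : Type*) [Fintype ι]

lemma hasSubgaussianMGF_sum_pi_radem :
    HasSubgaussianMGF (fun w : ι → ℝ => ∑ j, w j) (Fintype.card ι) (Measure.pi fun _ => radem) := by
  have hindep : iIndepFun (fun (j : ι) (w : ι → ℝ) => w j) (Measure.pi fun _ => radem) :=
    iIndepFun_pi (X := fun _ => id) fun _ => aemeasurable_id
  have hcoord (j : ι) : HasSubgaussianMGF (fun w : ι → ℝ => w j) 1 (Measure.pi fun _ => radem) := by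
    refine .of_map (X := id) (measurable_pi_apply j).aemeasurable ?_
    rw [(measurePreserving_eval (fun _ : ι => radem) j).map_eq]
    exact hasSubgaussianMGF_id_radem
  simpa using HasSubgaussianMGF.sum_of_iIndepFun hindep (s := Finset.univ) fun j _ => hcoord j

lemma ae_abs_sum_le_card_pi_radem :
    ∀ᵐ w : ι → ℝ ∂(Measure.pi fun _ => radem), |∑ j, w j| ≤ Fintype.card ι := by
  have hcoord : ∀ᵐ w : ι → ℝ ∂(Measure.pi fun _ => radem), ∀ j, |w j| ≤ 1 :=
    ae_all_iff.2 fun j => (Measure.quasiMeasurePreserving_eval (fun _ : ι => radem) j).ae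
      (ae_radem_iff (p := fun x => |x| ≤ 1).2 (by simp))
  filter_upwards [hcoord] with w hw
  calc |∑ j, w j| ≤ ∑ j, |w j| := Finset.abs_sum_le_sum_abs _ _
    _ ≤ ∑ _j : ι, (1 : ℝ) := Finset.sum_le_sum fun j _ => hw j
    _ = Fintype.card ι := by simp

end Pi

theorem radem_secondMoment_bound_general {Ω : Type*} {mΩ : MeasurableSpace Ω} {μ : Measure Ω}
    {Y : Ω → ℝ} {d : ℝ≥0} {n : ℕ} {M r ε x : ℝ} (hd : 1 ≤ d) (hY : HasSubgaussianMGF Y d μ)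
    (hYd : ∀ᵐ ω ∂μ, |Y ω| ≤ d) (hrM : |r| ≤ M) (hε : |ε| ≤ 1)
    (hx : n * ((1 + M ^ 2 / 2 * exp (M ^ 2)) * ε ^ 2 * r ^ 2 / √d) ≤ x) (hx2 : x < 1 / 2) :
    ∫ ω, (1 + ε ^ 2 * (exp (r ^ 2 / d * Y ω) - 1)) ^ n ∂μ ≤ hFun x := by
  have hx0 : 0 ≤ x := le_trans (by positivity) hx
  have hrate : 2 * d * (x / d) = 2 * x := by field_simp
  have hε2 : ε ^ 2 ≤ 1 := (sq_le_one_iff_abs_le_one ε).2 hε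
  calc ∫ ω, (1 + ε ^ 2 * (exp (r ^ 2 / d * Y ω) - 1)) ^ n ∂μ
      ≤ ∫ ω, exp x * exp (x / d * Y ω ^ 2) ∂μ := by
        refine integral_mono_of_nonneg
          (.of_forall fun ω => pow_nonneg (one_add_mul_exp_sub_one_nonneg (sq_nonneg ε) hε2 _) n)
          ((integrable_exp_mul_sq_of_hasSubgaussianMGF hY (by positivity)
            (by linarith)).const_mul _) ?_
        filter_upwards [hYd] with ω hω
        exact one_add_sq_mul_exp_sub_one_pow_le (mod_cast hd) hω hrM hε hx
    _ = exp x * ∫ ω, exp (x / d * Y ω ^ 2) ∂μ := integral_const_mul _ _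
    _ ≤ exp x * (√(1 - 2 * x))⁻¹ := by
        gcongr
        exact (integral_exp_mul_sq_le_of_hasSubgaussianMGF hY (by positivity)
          (by linarith)).trans_eq (by rw [hrate])
    _ ≤ hFun x := exp_mul_inv_sqrt_le_hFun hx0 hx2

/-- **Second-moment bound for the Rademacher mixture.**
With `C(M) = 1 + (M²/2)e^{M²}` and `a = C(M)ε²r²/√d`, if `n·a ≤ 1/4` then
`E[(1 + ε²(e^{(r²/d)Y} - 1))ⁿ] ≤ h(1/4) ≤ 3`, where `Y = Σⱼ Wⱼ` is a sum of `d` i.i.d.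
Rademacher random variables; moreover `h` is nondecreasing on `[0, 1/2)`. -/
theorem radem_secondMoment_bound (d n : ℕ) (hd : 1 ≤ d) (hn : 1 ≤ n)
    (M r ε : ℝ) (hM : 0 < M) (hr0 : 0 < r) (hrM : r ≤ M) (hε : ε ∈ Set.Ioo (0 : ℝ) 1)
    (ha : (n : ℝ) * ((1 + M ^ 2 / 2 * Real.exp (M ^ 2)) * ε ^ 2 * r ^ 2 / Real.sqrt d)
      ≤ 1 / 4) :
    (∫ w : Fin d → ℝ, (1 + ε ^ 2 * (Real.exp (r ^ 2 / d * ∑ j, w j) - 1)) ^ n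
        ∂(Measure.pi fun _ : Fin d => radem)) ≤ hFun (1 / 4) ∧
    hFun (1 / 4) ≤ 3 ∧
    MonotoneOn hFun (Set.Ico (0 : ℝ) (1 / 2)) := by
  have hbound := radem_secondMoment_bound_general (by simpa using hd)
    (hasSubgaussianMGF_sum_pi_radem (Fin d)) (ae_abs_sum_le_card_pi_radem (Fin d))
    ((abs_of_pos hr0).trans_le hrM) ((abs_of_pos hε.1).trans_le hε.2.le) (by simpa using ha)
    (by norm_num)
  exact ⟨by simpa using hbound, hFun_one_quarter_le_three, monotoneOn_hFun⟩

end
end
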